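/- Let E belong to the class A(λ,n,m). If there exists a dust-like self-similar set F that is Lipschitz equivalent to E, then m is a perfect power, i.e., there exist natural numbers a and i with i ≥ 2 such that m = a^i. -/

import Mathlib

open MeasureTheory Polynomial

/-- The class `𝒜(λ, n, m)` of self-similar subsets of `ℝ` with `m` exact overlaps,
generated by `n` similitudes `fᵢ x = λ x + bᵢ` of the same ratio `λ`. -/
def IsInClassA (lam : ℝ) (n m : ℕ) (E : Set ℝ) : Prop :=
  lam ∈ Set.Ioo (0 : ℝ) 1 ∧ 1 ≤ m ∧ m + 2 ≤ n ∧
  ∃ b : ℕ → ℝ,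
    b 0 = 0 ∧ b (n - 1) = 1 - lam ∧
    (∀ i, i + 1 < n → b i < b (i + 1)) ∧
    (∀ i, i + 1 < n →
      (Set.Icc (b i) (b i + lam) ∩ Set.Icc (b (i + 1)) (b (i + 1) + lam)).Nonempty →
        volume (Set.Icc (b i) (b i + lam) ∩ Set.Icc (b (i + 1)) (b (i + 1) + lam)) = 0 ∨
        volume (Set.Icc (b i) (b i + lam) ∩ Set.Icc (b (i + 1)) (b (i + 1) + lam)) =
          ENNReal.ofReal (lam * lam)) ∧
    {i : ℕ | i + 1 < n ∧
      volume (Set.Icc (b i) (b i + lam) ∩ Set.Icc (b (i + 1)) (b (i + 1) + lam)) =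
        ENNReal.ofReal (lam * lam)}.ncard = m ∧
    E.Nonempty ∧ IsCompact E ∧
    E = ⋃ i ∈ Finset.range n, (fun x => lam * x + b i) '' E

/-- A dust-like self-similar set in `ℝ^d`: the attractor of `t ≥ 2` contracting similitudes
whose images are pairwise disjoint (strong separation condition). -/
def IsDustLike {d : ℕ} (F : Set (EuclideanSpace ℝ (Fin d))) : Prop :=
  F.Nonempty ∧ IsCompact F ∧
  ∃ t : ℕ, 2 ≤ t ∧
    ∃ (g : Fin t → EuclideanSpace ℝ (Fin d) → EuclideanSpace ℝ (Fin d)) (r : Fin t → ℝ),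
      (∀ j, r j ∈ Set.Ioo (0 : ℝ) 1) ∧
      (∀ j x y, dist (g j x) (g j y) = r j * dist x y) ∧
      F = ⋃ j, g j '' F ∧
      (∀ j j', j ≠ j' → Disjoint (g j '' F) (g j' '' F))

/-- Lipschitz equivalence of two sets in (possibly different) metric spaces. -/
def LipEquiv {X Y : Type*} [MetricSpace X] [MetricSpace Y] (A : Set X) (B : Set Y) : Prop :=
  ∃ f : A → B, Function.Bijective f ∧ ∃ C : ℝ, 0 < C ∧
    ∀ x y : A, C⁻¹ * dist x y ≤ dist (f x) (f y) ∧ dist (f x) (f y) ≤ C * dist x y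

/-!
Let `s` be the similarity dimension of `F`, so that `∑ r_j ^ s = 1`. The `s`-dimensional Hausdorff
measure of `F` is positive and finite, hence so is that of `E`, and inclusion-exclusion over the
exact overlaps of `E` gives `1 = n ρ - m ρ²` for `ρ = λ ^ s`.

A bi-Lipschitz map sends each cylinder of `F` to a part of `E` which is separated from the rest of
`E` at the scale of its own diameter, hence is a union of boundedly many cylinders of `E` of one
level `l`. So its measure is `ρ ^ l` times an element of a fixed finite set, and the ratios of the
densities (image measure over measure) of a cylinder and its children take finitely many values.
Near the supremum of the density this rigidity makes the density constant, and comparing the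
cylinders of the words `j j ⋯ j` below such a point shows that a positive power of `r_j ^ s` is a
positive power of `ρ`.

Thus `ρ = x ^ k` and `r_j ^ s = x ^ q_j` for one `x > 0`, and `∑ x ^ q_j = 1`. If `m` were not a
perfect power, then `m X² - n X + 1` would remain irreducible after the substitution `X ↦ X ^ k`.
Then the polynomial `1 - ∑ X ^ q_j`, which vanishes at `x`, would vanish at a second positive point,
the `k`-th root of the other root `1 / (m ρ)`; but it is strictly decreasing on `[0, ∞)`.
-/

section Arithmetic

lemma dvd_of_pow_eq_pow_of_not_perfectPower {m a k d : ℕ}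
    (hm : ¬ ∃ a i : ℕ, 2 ≤ i ∧ m = a ^ i) (h : a ^ k = m ^ d) : k ∣ d := by
  rcases (Nat.gcd k d).eq_zero_or_pos with he | he
  · rw [(Nat.gcd_eq_zero_iff.1 he).2]
    exact dvd_zero k
  obtain ⟨k', d', hcop, hk, hd⟩ := Nat.exists_coprime k d
  have hreduced : a ^ k' = m ^ d' := by
    refine Nat.pow_left_injective he.ne' ?_
    simp only [← pow_mul, ← hk, ← hd, h]
  obtain ⟨c, -, hmc⟩ := Nat.exists_eq_pow_of_exponent_coprime_of_pow_eq_pow hcop hreduced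
  have hk'2 : k' < 2 := not_le.1 fun hk' ↦ hm ⟨c, k', hk', hmc⟩
  interval_cases k'
  · exact absurd ⟨1, 2, le_rfl, by simpa using hmc⟩ hm
  · rw [one_mul] at hk
    exact hk ▸ Nat.gcd_dvd_right k d

lemma exists_natCast_eq_of_pow_eq_natCast {q : ℚ} (hq : 0 ≤ q) {k N : ℕ} (hk : k ≠ 0)
    (h : q ^ k = N) : ∃ a : ℕ, q = a := by
  have hden : q.den = 1 := by
    have := congrArg Rat.den h
    rwa [Rat.den_pow, Rat.den_natCast, Nat.pow_eq_one, or_iff_left hk] at this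
  obtain ⟨a, ha⟩ := Int.eq_ofNat_of_zero_le (Rat.num_nonneg.2 hq)
  exact ⟨a, by rw [← Rat.coe_int_num_of_den_eq_one hden, ha]; simp⟩

lemma sq_sub_natCast_mul_add_natCast_ne_zero {m n : ℕ} (hm : 1 ≤ m) (hmn : m + 2 ≤ n) (x : ℚ) :
    x ^ 2 - n * x + m ≠ 0 := by
  intro hx
  have hint : IsIntegral ℤ x :=
    ⟨X ^ 2 - C (n : ℤ) * X + C (m : ℤ), by monicity!, by simpa [eval₂_eq_eval_map] using hx⟩
  obtain ⟨u, rfl⟩ := IsIntegrallyClosed.isIntegral_iff.1 hint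
  have hroot : u ^ 2 - n * u + m = 0 := by
    rw [eq_intCast] at hx
    exact_mod_cast hx
  have hmn' : (m : ℤ) + 2 ≤ n := by exact_mod_cast hmn
  have hm' : (1 : ℤ) ≤ m := by exact_mod_cast hm
  have hu_pos : 0 < u := by by_contra; nlinarith [hm', hmn']
  have hu_lt : 0 < n - u := by by_contra; nlinarith
  nlinarith

lemma monic_X_sq_sub_C_mul_X_add_C {R : Type*} [CommRing R] [Nontrivial R] (b c : R) :
    (X ^ 2 - C b * X + C c).Monic := by
  monicity!

lemma natDegree_X_sq_sub_C_mul_X_add_C {R : Type*} [CommRing R] [Nontrivial R] (b c : R) :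
    (X ^ 2 - C b * X + C c).natDegree = 2 := by
  compute_degree!

lemma irreducible_X_sq_sub_C_div_mul_X_add_C_inv {m n : ℕ} (hm : 1 ≤ m) (hmn : m + 2 ≤ n) :
    Irreducible (X ^ 2 - C (n / m : ℚ) * X + C (m : ℚ)⁻¹) := by
  have hdeg := natDegree_X_sq_sub_C_mul_X_add_C (n / m : ℚ) (m : ℚ)⁻¹
  have hm0 : (m : ℚ) ≠ 0 := by positivity
  rw [(monic_X_sq_sub_C_mul_X_add_C _ _).irreducible_iff_roots_eq_zero_of_degree_le_three hdeg.ge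
    (by omega), Multiset.eq_zero_iff_forall_notMem]
  intro q hq
  have hroot : q ^ 2 - n / m * q + (m : ℚ)⁻¹ = 0 := by simpa using (mem_roots'.1 hq).2
  have hq0 : q ≠ 0 := by
    rintro rfl
    simp [hm0] at hroot
  refine sq_sub_natCast_mul_add_natCast_ne_zero hm hmn q⁻¹ ?_
  field_simp at hroot ⊢
  linear_combination hroot

-- The complex roots of `X ^ k - a` all have modulus `a ^ (1 / k)`, so up to sign `c` is the
-- constant coefficient of `g`.
lemma exists_pow_eq_pow_of_dvd_X_pow_sub_C {K : Type*} [Field K] (j : K →+* ℝ) {a : K}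
    (ha : 0 ≤ j a) {k : ℕ} {g : K[X]} (hg : g.Monic) (hdvd : g ∣ X ^ k - C a) :
    ∃ c : K, c ^ k = a ^ g.natDegree := by
  let i : K →+* ℂ := Complex.ofRealHom.comp j
  have hi (z : K) : i z = (j z : ℂ) := rfl
  have hsplits : (g.map i).Splits := IsAlgClosed.splits _
  have hroots : ∀ z ∈ (g.map i).roots, ‖z‖ ^ k = j a := by
    intro z hz
    have hz' : ((X ^ k - C a).map i).IsRoot z :=
      (mem_roots'.1 hz).2.dvd (Polynomial.map_dvd i hdvd)
    have hzk : z ^ k = j a := by simpa [IsRoot, sub_eq_zero, hi] using hz'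
    rw [← norm_pow, hzk, Complex.norm_of_nonneg ha]
  have hcoeff : |j (g.coeff 0)| ^ k = j a ^ g.natDegree := by
    calc |j (g.coeff 0)| ^ k = ‖(g.map i).coeff 0‖ ^ k := by simp [hi]
      _ = ‖(g.map i).roots.prod‖ ^ k := by
        simp [hsplits.coeff_zero_eq_prod_roots_of_monic (hg.map i)]
      _ = ((g.map i).roots.map fun z ↦ ‖z‖ ^ k).prod := by
        rw [Multiset.prod_map_pow]
        exact congrArg (· ^ k) (map_multiset_prod (normHom : ℂ →*₀ ℝ) _)
      _ = j a ^ g.natDegree := by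
        rw [Multiset.map_congr rfl hroots, Multiset.map_const', Multiset.prod_replicate,
          ← hsplits.natDegree_eq_card_roots, hg.natDegree_map]
  obtain ⟨c, hc⟩ : ∃ c : K, j c = |j (g.coeff 0)| := by
    rcases abs_choice (j (g.coeff 0)) with h | h
    · exact ⟨_, h.symm⟩
    · exact ⟨-g.coeff 0, by rw [h, map_neg]⟩
  exact ⟨c, j.injective (by rw [map_pow, hc, hcoeff, map_pow])⟩

lemma irreducible_X_pow_sub_C_of_dvd {K : Type*} [Field K] (j : K →+* ℝ) {a : K}
    (ha : 0 ≤ j a) {k : ℕ} (hk : k ≠ 0)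
    (hdvd : ∀ (c : K) (d : ℕ), c ^ k = a ^ d → k ∣ d) : Irreducible (X ^ k - C a) := by
  have hmonic : (X ^ k - C a).Monic := monic_X_pow_sub_C a hk
  have hdeg : (X ^ k - C a).natDegree = k := natDegree_X_pow_sub_C
  refine (hmonic.irreducible_iff_natDegree').2 ⟨fun h ↦ hk ?_, fun f g _ hg hfg hgdeg ↦ ?_⟩
  · rw [← hdeg, h, natDegree_one]
  · obtain ⟨c, hc⟩ := exists_pow_eq_pow_of_dvd_X_pow_sub_C j ha hg (Dvd.intro_left f hfg)
    rw [hdeg, Finset.mem_Ioc] at hgdeg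
    have := Nat.le_of_dvd hgdeg.1 (hdvd c _ hc)
    omega

open IntermediateField in
lemma irreducible_comp_X_pow_of_dvd {K : Type*} [Field K] [Algebra K ℝ] {f : K[X]} (hf : f.Monic)
    (hirr : Irreducible f) {x : ℝ} (hx : 0 ≤ x) (hfx : aeval x f = 0) {k : ℕ} (hk : k ≠ 0)
    (hdvd : ∀ (c : K) (d : ℕ), c ^ k = ((-1) ^ f.natDegree * f.coeff 0) ^ d → k ∣ d) :
    Irreducible (f.comp (X ^ k)) := by
  refine irreducible_comp hf (monic_X_pow k) hirr fun E _ _ α hα ↦ ?_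
  have hint : IsIntegral K α := by
    by_contra h
    exact hf.ne_zero (hα ▸ minpoly.eq_zero h)
  have hroot : x ∈ (minpoly K α).aroots ℝ := by
    rw [hα, mem_aroots]
    exact ⟨hf.ne_zero, hfx⟩
  let j : K⟮α⟯ →ₐ[K] ℝ := (algHomAdjoinIntegralEquiv K hint).symm ⟨x, hroot⟩
  have hj : j (AdjoinSimple.gen K α) = x := algHomAdjoinIntegralEquiv_symm_apply_gen K hint _
  have hnorm : Algebra.norm K (AdjoinSimple.gen K α) = (-1) ^ f.natDegree * f.coeff 0 := by
    rw [← adjoin.powerBasis_gen hint, Algebra.PowerBasis.norm_gen_eq_coeff_zero_minpoly,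
      adjoin.powerBasis_gen hint, minpoly_gen, hα, adjoin.powerBasis_dim, hα]
  rw [Polynomial.map_pow, map_X]
  refine irreducible_X_pow_sub_C_of_dvd (j : K⟮α⟯ →+* ℝ) (by simpa [hj] using hx) hk
    fun c d hcd ↦ hdvd (Algebra.norm K c) d ?_
  rw [← map_pow, hcd, map_pow, hnorm]

lemma aeval_eq_zero_of_irreducible_of_aeval_eq_zero {K A : Type*} [Field K] [CommRing A]
    [Algebra K A] [Nontrivial A] {f P : K[X]} (hf : Irreducible f) {x y : A} (hx : aeval x f = 0)
    (hy : aeval y f = 0) (hP : aeval x P = 0) : aeval y P = 0 := by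
  obtain ⟨Q, rfl⟩ : f ∣ P :=
    dvd_of_mul_right_dvd (minpoly.eq_of_irreducible hf hx ▸ minpoly.dvd K x hP)
  rw [map_mul, hy, zero_mul]

lemma irreducible_quadratic_comp_X_pow {m n : ℕ} (hm : 1 ≤ m) (hmn : m + 2 ≤ n)
    (hpow : ¬ ∃ a i : ℕ, 2 ≤ i ∧ m = a ^ i) {r : ℝ} (hr : 0 < r) (hroot : 1 = n * r - m * r ^ 2)
    {k : ℕ} (hk : k ≠ 0) :
    Irreducible ((X ^ 2 - C (n / m : ℚ) * X + C (m : ℚ)⁻¹).comp (X ^ k)) := by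
  have hm0 : (m : ℝ) ≠ 0 := by positivity
  refine irreducible_comp_X_pow_of_dvd (monic_X_sq_sub_C_mul_X_add_C _ _)
    (irreducible_X_sq_sub_C_div_mul_X_add_C_inv hm hmn) hr.le ?_ hk fun c d hcd ↦ ?_
  · simp only [map_add, map_sub, map_mul, map_pow, aeval_X, aeval_C, map_inv₀, map_div₀,
      map_natCast]
    field_simp
    linear_combination hroot
  · have hc : |c|⁻¹ ^ k = (m ^ d : ℕ) := by
      rw [inv_pow, ← abs_pow, hcd, natDegree_X_sq_sub_C_mul_X_add_C]
      simp
    obtain ⟨a, ha⟩ := exists_natCast_eq_of_pow_eq_natCast (by positivity) hk hc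
    exact dvd_of_pow_eq_pow_of_not_perfectPower hpow (by rw [ha] at hc; exact_mod_cast hc)

lemma exists_common_root_of_pow_eq_pow {ι : Type*} [Finite ι] {r : ℝ} (hr : 0 < r) {p : ι → ℝ}
    (hp : ∀ j, 0 < p j) (hpow : ∀ j, ∃ K L : ℕ, 0 < K ∧ 0 < L ∧ p j ^ K = r ^ L) :
    ∃ (k : ℕ) (x : ℝ) (q : ι → ℕ), k ≠ 0 ∧ 0 < x ∧ x ^ k = r ∧
      ∀ j, q j ≠ 0 ∧ p j = x ^ q j := by
  have := Fintype.ofFinite ι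
  choose K L hK hL hKL using hpow
  have hk : ∏ j, K j ≠ 0 := Finset.prod_ne_zero_iff.2 fun j _ ↦ (hK j).ne'
  set x : ℝ := r ^ ((∏ j, K j : ℕ) : ℝ)⁻¹
  have hx : 0 < x := Real.rpow_pos_of_pos hr _
  have hxk : x ^ ∏ j, K j = r := Real.rpow_inv_natCast_pow hr.le hk
  choose c hc using fun j ↦ Finset.dvd_prod_of_mem K (Finset.mem_univ j)
  refine ⟨∏ j, K j, x, fun j ↦ c j * L j, hk, hx, hxk, fun j ↦ ⟨mul_ne_zero ?_ (hL j).ne', ?_⟩⟩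
  · exact right_ne_zero_of_mul (hc j ▸ hk)
  · refine (pow_left_inj₀ (hp j).le (by positivity) (hK j).ne').1 ?_
    calc p j ^ K j = (x ^ (K j * c j)) ^ L j := by rw [hKL, ← hc, hxk]
      _ = (x ^ (c j * L j)) ^ K j := by simp only [← pow_mul]; ring_nf

lemma exists_conjugate_root {m n : ℕ} (hm : 1 ≤ m) (hmn : m + 2 ≤ n) {r : ℝ} (hr : 0 < r)
    (hroot : 1 = n * r - m * r ^ 2) : ∃ r', 0 < r' ∧ r' ≠ r ∧ 1 = n * r' - m * r' ^ 2 := by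
  have hm' : (1 : ℝ) ≤ m := by exact_mod_cast hm
  have hmn' : (m : ℝ) + 2 ≤ n := by exact_mod_cast hmn
  refine ⟨(m * r)⁻¹, by positivity, fun h ↦ ?_, ?_⟩
  · have hdouble : m * r ^ 2 = 1 := by field_simp at h; linarith
    have hdisc : (n : ℝ) ^ 2 = 4 * m := by
      linear_combination (-(n : ℝ) ^ 2 + m * (n * r + 2)) * hdouble - m * (n * r + 2) * hroot
    nlinarith
  · field_simp
    linarith

lemma strictMonoOn_sum_pow {ι : Type*} [Fintype ι] [Nonempty ι] {q : ι → ℕ} (hq : ∀ j, q j ≠ 0) :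
    StrictMonoOn (fun x : ℝ ↦ ∑ j, x ^ q j) (Set.Ici 0) := fun _ hx _ _ hxy ↦
  Finset.sum_lt_sum_of_nonempty Finset.univ_nonempty fun j _ ↦ pow_lt_pow_left₀ hxy hx (hq j)

theorem perfectPower_of_sum_eq_one_of_pow_eq_pow {ι : Type*} [Fintype ι] [Nonempty ι] {m n : ℕ}
    (hm : 1 ≤ m) (hmn : m + 2 ≤ n) {r : ℝ} (hr : 0 < r) (hroot : 1 = n * r - m * r ^ 2)
    {p : ι → ℝ} (hp : ∀ j, 0 < p j) (hsum : ∑ j, p j = 1)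
    (hpow : ∀ j, ∃ K L : ℕ, 0 < K ∧ 0 < L ∧ p j ^ K = r ^ L) :
    ∃ a i : ℕ, 2 ≤ i ∧ m = a ^ i := by
  by_contra hm_pow
  obtain ⟨k, x, q, hk, hx, rfl, hq⟩ := exists_common_root_of_pow_eq_pow hr hp hpow
  obtain ⟨r', hr', hne, hroot'⟩ := exists_conjugate_root hm hmn hr hroot
  set y : ℝ := r' ^ (k : ℝ)⁻¹
  have hy : 0 < y := Real.rpow_pos_of_pos hr' _
  have hyk : y ^ k = r' := Real.rpow_inv_natCast_pow hr'.le hk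
  have hxsum : ∑ j, x ^ q j = 1 := by simp only [← (hq _).2, hsum]
  have hkill (z : ℝ) (hz : 1 = n * z ^ k - m * (z ^ k) ^ 2) :
      aeval z ((X ^ 2 - C (n / m : ℚ) * X + C (m : ℚ)⁻¹).comp (X ^ k)) = 0 := by
    have hm0 : (m : ℝ) ≠ 0 := by positivity
    simp only [aeval_comp, map_add, map_sub, map_mul, map_pow, aeval_X, aeval_C, map_inv₀,
      map_div₀, map_natCast]
    field_simp
    linear_combination hz
  have hysum : ∑ j, y ^ q j = 1 := by
    have := aeval_eq_zero_of_irreducible_of_aeval_eq_zero (P := 1 - ∑ j, X ^ q j)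
      (irreducible_quadratic_comp_X_pow hm hmn hm_pow hr hroot hk) (hkill x hroot)
      (hkill y (hyk ▸ hroot')) (by simp [hxsum])
    exact (sub_eq_zero.1 (by simpa using this)).symm
  have hxy : x = y := (strictMonoOn_sum_pow fun j ↦ (hq j).1).injOn hx.le hy.le
    (hxsum.trans hysum.symm)
  exact hne (by rw [← hyk, hxy])

end Arithmetic

section DensityRatio

lemma exists_one_lt_forall_lt_imp_le_one {Φ : Set ℝ} (hΦ : Φ.Finite) :
    ∃ c > 1, ∀ y ∈ Φ, y < c → y ≤ 1 := by
  have hclosed : IsClosed (Φ ∩ Set.Ioi 1) := (hΦ.inter_of_left _).isClosed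
  obtain ⟨c, hc, hsub⟩ := exists_Ico_subset_of_mem_nhds
    (hclosed.isOpen_compl.mem_nhds (x := 1) fun h ↦ lt_irrefl (1 : ℝ) h.2) ⟨2, one_lt_two⟩
  exact ⟨c, hc, fun y hy hyc ↦ not_lt.1 fun h1y ↦ hsub ⟨h1y.le, hyc⟩ ⟨hy, h1y⟩⟩

lemma finite_setOf_pow_mul_div {ι : Type*} [Finite ι] {D : ℕ} {S : Set ℝ} (hS : S.Finite) (r : ℝ)
    (p : ι → ℝ) :
    {x | ∃ e ≤ D, ∃ a ∈ S, ∃ b ∈ S, ∃ j, x = r ^ e * a / (p j * b)}.Finite := by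
  refine ((((Set.finite_Iic D).prod (hS.prod (hS.prod Set.finite_univ))).image
    fun q : ℕ × ℝ × ℝ × ι ↦ r ^ q.1 * q.2.1 / (p q.2.2.2 * q.2.2.1))).subset ?_
  rintro _ ⟨e, he, a, ha, b, hb, j, rfl⟩
  exact ⟨(e, a, b, j), ⟨he, ha, hb, trivial⟩, rfl⟩

variable {ι : Type*} [Fintype ι] {p : ι → ℝ}

-- Start where `u` nearly attains its supremum: finiteness of the set of ratios then forbids any
-- increase, and the mean value property forbids a decrease.
lemma exists_forall_append_eq_of_sum_mul_eq {u : List ι → ℝ} (hp : ∀ j, 0 < p j)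
    (hsum : ∑ j, p j = 1) (hu : ∀ w, 0 < u w) (hbdd : BddAbove (Set.range u))
    (hmean : ∀ w, ∑ j, p j * u (j :: w) = u w) {Φ : Set ℝ} (hΦ : Φ.Finite)
    (hratio : ∀ w j, u (j :: w) / u w ∈ Φ) : ∃ w₀, ∀ v, u (v ++ w₀) = u w₀ := by
  obtain ⟨c, hc, hgap⟩ := exists_one_lt_forall_lt_imp_le_one hΦ
  have hle (w : List ι) : u w ≤ sSup (Set.range u) := le_csSup hbdd ⟨w, rfl⟩
  obtain ⟨_, ⟨w₀, rfl⟩, hw₀⟩ := exists_lt_of_lt_csSup (Set.range_nonempty u)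
    (div_lt_self ((hu []).trans_le (hle [])) hc)
  rw [div_lt_iff₀ (zero_lt_one.trans hc)] at hw₀
  have hstep (w : List ι) (hw : u w = u w₀) (j : ι) : u (j :: w) = u w := by
    have hle_parent (i : ι) : u (i :: w) ≤ u w := by
      refine (div_le_one (hu w)).1 (hgap _ (hratio w i) ?_)
      rw [div_lt_iff₀ (hu w), hw, mul_comm]
      exact (hle _).trans_lt hw₀
    have hterms := (Finset.sum_eq_sum_iff_of_le fun i _ ↦
      mul_le_mul_of_nonneg_left (hle_parent i) (hp i).le).1
      (by rw [hmean, ← Finset.sum_mul, hsum, one_mul])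
    exact mul_left_cancel₀ (hp j).ne' (hterms j (Finset.mem_univ j))
  refine ⟨w₀, fun v ↦ ?_⟩
  induction v with
  | nil => rfl
  | cons j v ih => rw [List.cons_append, hstep _ ih j, ih]

variable {M : List ι → ℝ} {r : ℝ} {S : Set ℝ} {l : List ι → ℕ}

lemma exists_forall_append_eq_mul_prod {D : ℕ} {C : ℝ} (hp : ∀ j, 0 < p j) (hsum : ∑ j, p j = 1)
    (hM : ∀ w, 0 < M w) (hadd : ∀ w, M w = ∑ j, M (j :: w))
    (hC : ∀ w, M w ≤ C * (w.map p).prod) (hr : 0 < r) (hS : S.Finite)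
    (hMS : ∀ w, ∃ a ∈ S, M w = r ^ l w * a) (hl : ∀ w j, l w ≤ l (j :: w))
    (hlD : ∀ w j, l (j :: w) ≤ l w + D) :
    ∃ w₀, ∀ v, M (v ++ w₀) = (v.map p).prod * M w₀ := by
  have hP (w : List ι) : 0 < (w.map p).prod := List.prod_pos (by simp [hp])
  obtain ⟨w₀, hw₀⟩ := exists_forall_append_eq_of_sum_mul_eq (u := fun w ↦ M w / (w.map p).prod)
    hp hsum (fun w ↦ div_pos (hM w) (hP w))
    ⟨C, by rintro _ ⟨w, rfl⟩; exact (div_le_iff₀ (hP w)).2 (hC w)⟩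
    (fun w ↦ by
      simp only [List.map_cons, List.prod_cons, hadd w, Finset.sum_div]
      exact Finset.sum_congr rfl fun j _ ↦ by
        have := (hp j).ne'
        field_simp)
    (finite_setOf_pow_mul_div (D := D) hS r p)
    (fun w j ↦ by
      obtain ⟨a, ha, hMa⟩ := hMS (j :: w)
      obtain ⟨b, hb, hMb⟩ := hMS w
      refine ⟨l (j :: w) - l w, Nat.sub_le_iff_le_add'.2 (hlD w j), a, ha, b, hb, j, ?_⟩
      have hr_pow : r ^ l (j :: w) = r ^ l w * r ^ (l (j :: w) - l w) := by
        rw [← pow_add, Nat.add_sub_cancel' (hl w j)]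
      have := (hp j).ne'
      have := (hP w).ne'
      have := hr.ne'
      have hb0 : b ≠ 0 := right_ne_zero_of_mul (hMb ▸ (hM w).ne')
      rw [List.map_cons, List.prod_cons, hMa, hMb, hr_pow]
      field_simp)
  refine ⟨w₀, fun v ↦ ?_⟩
  have hv := hw₀ v
  have := (hP w₀).ne'
  have := (hP v).ne'
  rw [List.map_append, List.prod_append] at hv
  field_simp at hv
  linarith

lemma exists_pow_eq_pow_of_pow_mul_mem_finite {q b : ℝ} (hq : 0 < q) (hq1 : q < 1) (hb : 0 < b)
    (hS : S.Finite) {e : ℕ → ℕ} (he : Monotone e)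
    (h : ∀ k, ∃ a ∈ S, q ^ k * b = r ^ e k * a) : ∃ K L : ℕ, 0 < K ∧ 0 < L ∧ q ^ K = r ^ L := by
  choose a haS ha using h
  obtain ⟨k₁, k₂, hlt, heq⟩ : ∃ k₁ k₂, k₁ < k₂ ∧ a k₁ = a k₂ := by
    obtain ⟨k₁, -, k₂, -, hne, heq⟩ :=
      Set.infinite_univ.exists_ne_map_eq_of_mapsTo (f := a) (fun k _ ↦ haS k) hS
    rcases hne.lt_or_gt with h | h
    exacts [⟨k₁, k₂, h, heq⟩, ⟨k₂, k₁, h, heq.symm⟩]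
  have hpow : q ^ (k₂ - k₁) = r ^ (e k₂ - e k₁) := by
    have hpos : 0 < q ^ k₁ * b := by positivity
    have hq_pow : q ^ k₂ = q ^ k₁ * q ^ (k₂ - k₁) := by rw [← pow_add, Nat.add_sub_cancel' hlt.le]
    have hr_pow : r ^ e k₂ = r ^ e k₁ * r ^ (e k₂ - e k₁) := by
      rw [← pow_add, Nat.add_sub_cancel' (he hlt.le)]
    refine mul_left_cancel₀ hpos.ne' ?_
    calc q ^ k₁ * b * q ^ (k₂ - k₁) = r ^ e k₂ * a k₂ := by rw [← ha, hq_pow]; ring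
      _ = q ^ k₁ * b * r ^ (e k₂ - e k₁) := by rw [hr_pow, ha k₁, heq]; ring
  have hK : 0 < k₂ - k₁ := Nat.sub_pos_of_lt hlt
  refine ⟨_, _, hK, Nat.pos_of_ne_zero fun hL ↦ ?_, hpow⟩
  rw [hL, pow_zero] at hpow
  exact (pow_lt_one₀ hq.le hq1 hK.ne').ne hpow

theorem exists_pow_eq_pow_of_additive {D : ℕ} {C : ℝ} (hp : ∀ j, 0 < p j) (hp1 : ∀ j, p j < 1)
    (hsum : ∑ j, p j = 1) (hM : ∀ w, 0 < M w) (hadd : ∀ w, M w = ∑ j, M (j :: w))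
    (hC : ∀ w, M w ≤ C * (w.map p).prod) (hr : 0 < r) (hS : S.Finite)
    (hMS : ∀ w, ∃ a ∈ S, M w = r ^ l w * a) (hl : ∀ w j, l w ≤ l (j :: w))
    (hlD : ∀ w j, l (j :: w) ≤ l w + D) (j : ι) :
    ∃ K L : ℕ, 0 < K ∧ 0 < L ∧ p j ^ K = r ^ L := by
  obtain ⟨w₀, hw₀⟩ := exists_forall_append_eq_mul_prod hp hsum hM hadd hC hr hS hMS hl hlD
  refine exists_pow_eq_pow_of_pow_mul_mem_finite (hp j) (hp1 j) (hM w₀) hS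
    (e := fun k ↦ l (List.replicate k j ++ w₀)) (monotone_nat_of_le_succ fun k ↦ ?_) fun k ↦ ?_
  · rw [List.replicate_succ]
    exact hl _ j
  · simpa [hw₀] using hMS (List.replicate k j ++ w₀)

end DensityRatio

section HausdorffMeasure

variable {X Y : Type*} [MetricSpace X] [MeasurableSpace X] [BorelSpace X] [MetricSpace Y]
  [MeasurableSpace Y] [BorelSpace Y] {s : ℝ}

lemma hausdorffMeasure_image_of_dist_eq_mul {f : X → Y} {c : ℝ} (hc : 0 < c) (hs : 0 ≤ s)
    (hf : ∀ x y, dist (f x) (f y) = c * dist x y) (A : Set X) :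
    μH[s] (f '' A) = ENNReal.ofReal (c ^ s) * μH[s] A := by
  lift c to NNReal using hc.le
  have hc0 : c ≠ 0 := by exact_mod_cast hc.ne'
  have hcoe : ENNReal.ofReal ((c : ℝ) ^ s) = (c : ENNReal) ^ s := by
    rw [← ENNReal.ofReal_rpow_of_pos hc, ENNReal.ofReal_coe_nnreal]
  have hlip : LipschitzWith c f := .of_dist_le_mul fun x y ↦ (hf x y).le
  have hanti : AntilipschitzWith c⁻¹ f := .of_le_mul_dist fun x y ↦ by
    rw [hf, NNReal.coe_inv, inv_mul_cancel_left₀ hc.ne']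
  rw [hcoe]
  refine (hlip.hausdorffMeasure_image_le hs A).antisymm ?_
  have h := hanti.le_hausdorffMeasure_image hs A
  rw [ENNReal.coe_inv hc0, ENNReal.inv_rpow] at h
  exact (ENNReal.mul_le_iff_le_inv (by simp [hc0]) (by simp [hs])).2 h

lemma hausdorffMeasure_real_image_of_dist_eq_mul {f : X → Y} {c : ℝ} (hc : 0 < c) (hs : 0 ≤ s)
    (hf : ∀ x y, dist (f x) (f y) = c * dist x y) (A : Set X) :
    μH[s].real (f '' A) = c ^ s * μH[s].real A := by
  rw [measureReal_def, hausdorffMeasure_image_of_dist_eq_mul hc hs hf, ENNReal.toReal_mul,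
    ENNReal.toReal_ofReal (by positivity), measureReal_def]

lemma hausdorffMeasure_image_ne_top {f : X → Y} {K : NNReal} (hf : LipschitzWith K f) (hs : 0 ≤ s)
    {A : Set X} (hA : μH[s] A ≠ ⊤) : μH[s] (f '' A) ≠ ⊤ :=
  ne_top_of_le_ne_top
    (ENNReal.mul_ne_top (ENNReal.rpow_ne_top_of_nonneg hs ENNReal.coe_ne_top) hA)
    (hf.hausdorffMeasure_image_le hs A)

lemma le_hausdorffMeasure_of_le_ediam_rpow {μ : OuterMeasure X}
    (h : ∀ S, μ S ≤ Metric.ediam S ^ s) (A : Set X) : μ A ≤ μH[s] A := by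
  have hle := OuterMeasure.le_mkMetric (fun x ↦ x ^ s) μ 1 one_pos fun S _ ↦ h S
  rw [← Measure.mkMetric_toOuterMeasure] at hle
  exact hle A

end HausdorffMeasure

section WordProducts

variable {ι : Type*} {r : ι → ℝ}

lemma prod_map_pos (hr : ∀ j, 0 < r j) (w : List ι) : 0 < (w.map r).prod :=
  List.prod_pos (by simp [hr])

lemma prod_map_rpow (hr : ∀ j, 0 < r j) (s : ℝ) (w : List ι) :
    (w.map fun j ↦ r j ^ s).prod = (w.map r).prod ^ s := by
  induction w with
  | nil => simp
  | cons j w ih =>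
    simp only [List.map_cons, List.prod_cons, ih,
      Real.mul_rpow (hr j).le (prod_map_pos hr w).le]

lemma prod_map_le_pow_length (hr : ∀ j, 0 < r j) {c : ℝ} (hc : ∀ j, r j ≤ c) (w : List ι) :
    (w.map r).prod ≤ c ^ w.length := by
  induction w with
  | nil => simp
  | cons j w ih =>
    rw [List.map_cons, List.prod_cons, List.length_cons, pow_succ']
    exact mul_le_mul (hc j) ih (prod_map_pos hr w).le ((hr j).le.trans (hc j))

lemma exists_forall_le_and_lt_one [Finite ι] (hr : ∀ j, 0 < r j) (hr1 : ∀ j, r j < 1) :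
    ∃ c, 0 ≤ c ∧ c < 1 ∧ ∀ j, r j ≤ c := by
  rcases isEmpty_or_nonempty ι with hι | hι
  · exact ⟨0, le_rfl, one_pos, isEmptyElim⟩
  · obtain ⟨i, hi⟩ := Finite.exists_max r
    exact ⟨r i, (hr i).le, hr1 i, hi⟩

lemma exists_pos_sum_rpow_eq_one [Fintype ι] [Nontrivial ι] (hr : ∀ j, 0 < r j)
    (hr1 : ∀ j, r j < 1) : ∃ s : ℝ, 0 < s ∧ ∑ j, r j ^ s = 1 := by
  have hcont : Continuous fun s : ℝ ↦ ∑ j, r j ^ s :=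
    continuous_finsetSum _ fun j _ ↦ Real.continuous_const_rpow (hr j).ne'
  have hlim : Filter.Tendsto (fun s : ℝ ↦ ∑ j, r j ^ s) Filter.atTop (nhds 0) := by
    simpa using tendsto_finsetSum Finset.univ fun j _ ↦
      tendsto_rpow_atTop_of_base_lt_one (r j) (by linarith [hr j]) (hr1 j)
  obtain ⟨t, ht, ht0⟩ :=
    ((hlim.eventually_lt_const one_pos).and (Filter.eventually_gt_atTop 0)).exists
  have hzero : 1 < ∑ j, r j ^ (0 : ℝ) := by
    simpa using Fintype.one_lt_card (α := ι)
  obtain ⟨s, hs, hsum⟩ := intermediate_value_Icc' ht0.le hcont.continuousOn ⟨ht.le, hzero.le⟩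
  refine ⟨s, hs.1.lt_of_ne ?_, hsum⟩
  rintro rfl
  exact hzero.ne' hsum

end WordProducts

section Bernoulli

variable {ι : Type*}

lemma subsingleton_or_subset_cylinder (T : Set (ℕ → ι)) :
    T.Subsingleton ∨
      ∃ x ∈ T, ∃ y ∈ T, x ≠ y ∧ T ⊆ PiNat.cylinder x (PiNat.firstDiff x y) := by
  rcases T.subsingleton_or_nontrivial with hT | ⟨x, hx, y, hy, hxy⟩
  · exact .inl hT
  obtain ⟨z, ⟨hz, hxz⟩, hmin⟩ := exists_minimalFor_of_wellFoundedLT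
    (fun z ↦ z ∈ T ∧ x ≠ z) (PiNat.firstDiff x) ⟨y, hy, hxy⟩
  refine .inr ⟨x, hx, z, hz, hxz, fun u hu ↦ ?_⟩
  rcases eq_or_ne x u with rfl | hxu
  · exact PiNat.self_mem_cylinder _ _
  · rw [PiNat.mem_cylinder_comm, PiNat.mem_cylinder_iff_le_firstDiff hxu]
    exact le_of_not_gt fun hlt ↦ hlt.not_ge (hmin ⟨hu, hxu⟩ hlt.le)

lemma prod_map_res {M : Type*} [CommMonoid M] (p : ι → M) (x : ℕ → ι) (k : ℕ) :
    ((PiNat.res x k).map p).prod = ∏ i ∈ Finset.range k, p (x i) := by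
  induction k with
  | zero => simp
  | succ k ih => rw [PiNat.res_succ, List.map_cons, List.prod_cons, ih, Finset.prod_range_succ_comm]

lemma exists_measure_cylinder_eq [Fintype ι] [MeasurableSpace ι] [MeasurableSingletonClass ι]
    {p : ι → ℝ} (hp : ∀ j, 0 ≤ p j) (hsum : ∑ j, p j = 1) :
    ∃ ν : Measure (ℕ → ι), IsProbabilityMeasure ν ∧ ∀ x k,
      ν (PiNat.cylinder x k) = ENNReal.ofReal ((PiNat.res x k).map p).prod := by
  let P : PMF ι := PMF.ofFintype (fun j ↦ ENNReal.ofReal (p j)) (by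
    rw [← ENNReal.ofReal_sum_of_nonneg fun j _ ↦ hp j, hsum, ENNReal.ofReal_one])
  refine ⟨Measure.infinitePi fun _ ↦ P.toMeasure, inferInstance, fun x k ↦ ?_⟩
  have hcyl : PiNat.cylinder x k = Set.pi (Finset.range k : Set ℕ) fun i ↦ {x i} := by
    ext y
    simp [PiNat.cylinder]
  rw [hcyl, Measure.infinitePi_pi _ fun i _ ↦ .singleton _, prod_map_res,
    ENNReal.ofReal_prod_of_nonneg fun i _ ↦ hp _]
  refine Finset.prod_congr rfl fun i _ ↦ ?_
  rw [PMF.toMeasure_apply_singleton _ _ (.singleton _)]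
  rfl

lemma nullSingletonClass_of_measure_cylinder_eq [Finite ι] [MeasurableSpace ι]
    [MeasurableSingletonClass ι] {p : ι → ℝ} (hp : ∀ j, 0 < p j) (hp1 : ∀ j, p j < 1)
    {ν : Measure (ℕ → ι)}
    (hν : ∀ x k, ν (PiNat.cylinder x k) = ENNReal.ofReal ((PiNat.res x k).map p).prod) :
    NullSingletonClass ν := by
  obtain ⟨c, hc0, hc1, hc⟩ := exists_forall_le_and_lt_one hp hp1
  refine ⟨fun x ↦ ?_⟩
  have hlim : Filter.Tendsto (fun k : ℕ ↦ ENNReal.ofReal (c ^ k)) Filter.atTop (nhds 0) := by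
    simpa using ENNReal.tendsto_ofReal (tendsto_pow_atTop_nhds_zero_of_lt_one hc0 hc1)
  refine le_antisymm (ge_of_tendsto' hlim fun k ↦ ?_) bot_le
  calc ν {x} ≤ ν (PiNat.cylinder x k) :=
        measure_mono (Set.singleton_subset_iff.2 (PiNat.self_mem_cylinder x k))
    _ ≤ ENNReal.ofReal (c ^ k) := by
      rw [hν]
      exact ENNReal.ofReal_le_ofReal (by simpa using prod_map_le_pow_length hp hc (PiNat.res x k))

end Bernoulli

section DustLikeSystem

/-- A system of contracting similitudes of ratios `r j` satisfying the strong separation condition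
and having the whole space `Y` as its attractor. A dust-like set `F` is recovered as the subtype
`Y = F`, which removes all membership side conditions. -/
structure IsDustLikeSystem {ι Y : Type*} [MetricSpace Y] (g : ι → Y → Y) (r : ι → ℝ) : Prop where
  ratio_pos : ∀ j, 0 < r j
  ratio_lt_one : ∀ j, r j < 1
  dist_map : ∀ j x y, dist (g j x) (g j y) = r j * dist x y
  iUnion_range : ⋃ j, Set.range (g j) = Set.univ
  disjoint_range : Pairwise fun i j ↦ Disjoint (Set.range (g i)) (Set.range (g j))

/-- The composition of the maps `g j` along a word. The head of the list is the innermost map, so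
that `j :: w` refines `w` and `PiNat.res` lists the prefixes of an infinite word. -/
def wordMap {ι Y : Type*} (g : ι → Y → Y) : List ι → Y → Y
  | [] => id
  | j :: w => wordMap g w ∘ g j

namespace IsDustLikeSystem

variable {ι Y : Type*} [MetricSpace Y] {g : ι → Y → Y} {r : ι → ℝ} {s : ℝ}

lemma dist_wordMap (h : IsDustLikeSystem g r) (w : List ι) (x y : Y) :
    dist (wordMap g w x) (wordMap g w y) = (w.map r).prod * dist x y := by
  induction w generalizing x y with
  | nil => simp [wordMap]
  | cons j w ih =>
    simp only [wordMap, Function.comp_apply, ih, h.dist_map, List.map_cons, List.prod_cons]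
    ring

lemma lipschitzWith_wordMap (h : IsDustLikeSystem g r) (w : List ι) :
    LipschitzWith (w.map r).prod.toNNReal (wordMap g w) := .of_dist_le_mul fun x y ↦ by
  rw [h.dist_wordMap, Real.coe_toNNReal _ (prod_map_pos h.ratio_pos w).le]

lemma injective_wordMap (h : IsDustLikeSystem g r) (w : List ι) :
    Function.Injective (wordMap g w) := fun x y hxy ↦ by
  have hdist := h.dist_wordMap w x y
  rw [hxy, dist_self, zero_eq_mul] at hdist
  exact dist_eq_zero.1 (hdist.resolve_left (prod_map_pos h.ratio_pos w).ne')

lemma iUnion_range_wordMap_cons (h : IsDustLikeSystem g r) (w : List ι) :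
    ⋃ j, Set.range (wordMap g (j :: w)) = Set.range (wordMap g w) := by
  simp only [wordMap, Set.range_comp (wordMap g w), ← Set.image_iUnion, h.iUnion_range,
    Set.image_univ]

lemma range_wordMap_cons_subset (h : IsDustLikeSystem g r) (w : List ι) (j : ι) :
    Set.range (wordMap g (j :: w)) ⊆ Set.range (wordMap g w) :=
  h.iUnion_range_wordMap_cons w ▸ Set.subset_iUnion (fun j ↦ Set.range (wordMap g (j :: w))) j

lemma disjoint_range_wordMap_cons (h : IsDustLikeSystem g r) (w : List ι) :
    Pairwise fun i j ↦
      Disjoint (Set.range (wordMap g (i :: w))) (Set.range (wordMap g (j :: w))) := by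
  intro i j hij
  simp only [wordMap, Set.range_comp (wordMap g w)]
  exact (Set.disjoint_image_iff (h.injective_wordMap w)).2 (h.disjoint_range hij)

lemma iUnion_range_wordMap_ofFn (h : IsDustLikeSystem g r) (k : ℕ) :
    ⋃ v : Fin k → ι, Set.range (wordMap g (List.ofFn v)) = Set.univ := by
  induction k with
  | zero => simp [wordMap, Set.iUnion_const]
  | succ k ih =>
    refine Set.eq_univ_of_forall fun x ↦ ?_
    obtain ⟨v, hv⟩ := Set.mem_iUnion.1 (ih.symm ▸ Set.mem_univ x)
    rw [← h.iUnion_range_wordMap_cons] at hv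
    obtain ⟨j, hj⟩ := Set.mem_iUnion.1 hv
    exact Set.mem_iUnion.2 ⟨Fin.cons j v, by rwa [List.ofFn_cons]⟩

lemma ediam_range_wordMap_le (h : IsDustLikeSystem g r) (w : List ι) :
    Metric.ediam (Set.range (wordMap g w)) ≤
      ENNReal.ofReal (w.map r).prod * Metric.ediam (Set.univ : Set Y) := by
  rw [← Set.image_univ]
  exact (h.lipschitzWith_wordMap w).ediam_image_le Set.univ

lemma sum_ediam_range_wordMap_rpow_le [Fintype ι] (h : IsDustLikeSystem g r) (hs : 0 < s)
    (hsum : ∑ j, r j ^ s = 1) (k : ℕ) :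
    ∑ v : Fin k → ι, Metric.ediam (Set.range (wordMap g (List.ofFn v))) ^ s ≤
      Metric.ediam (Set.univ : Set Y) ^ s := by
  have hnonneg (v : Fin k → ι) : 0 ≤ ∏ i, r (v i) ^ s :=
    Finset.prod_nonneg fun i _ ↦ Real.rpow_nonneg (h.ratio_pos _).le _
  calc ∑ v : Fin k → ι, Metric.ediam (Set.range (wordMap g (List.ofFn v))) ^ s
      ≤ ∑ v : Fin k → ι,
          ENNReal.ofReal (∏ i, r (v i) ^ s) * Metric.ediam (Set.univ : Set Y) ^ s := by
        refine Finset.sum_le_sum fun v _ ↦ ?_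
        have hprod : ∏ i, r (v i) ^ s = ((List.ofFn v).map r).prod ^ s := by
          rw [← prod_map_rpow h.ratio_pos, List.map_ofFn, List.prod_ofFn]
          rfl
        rw [hprod, ← ENNReal.ofReal_rpow_of_pos (prod_map_pos h.ratio_pos _),
          ← ENNReal.mul_rpow_of_nonneg _ _ hs.le]
        exact ENNReal.rpow_le_rpow (h.ediam_range_wordMap_le _) hs.le
    _ = Metric.ediam (Set.univ : Set Y) ^ s := by
        rw [← Finset.sum_mul, ← ENNReal.ofReal_sum_of_nonneg fun v _ ↦ hnonneg v,
          ← Fintype.sum_pow (fun j ↦ r j ^ s) k, hsum, one_pow, ENNReal.ofReal_one, one_mul]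

lemma exists_forall_mem_range_wordMap_res [CompactSpace Y] [Nonempty Y]
    (h : IsDustLikeSystem g r) (x : ℕ → ι) :
    ∃ y, ∀ k, y ∈ Set.range (wordMap g (PiNat.res x k)) := by
  have hcompact (k : ℕ) : IsCompact (Set.range (wordMap g (PiNat.res x k))) :=
    isCompact_range (h.lipschitzWith_wordMap _).continuous
  simpa [Set.Nonempty] using IsCompact.nonempty_iInter_of_sequence_nonempty_isCompact_isClosed
    (fun k ↦ Set.range (wordMap g (PiNat.res x k)))
    (fun k ↦ h.range_wordMap_cons_subset _ (x k)) (fun k ↦ Set.range_nonempty _) (hcompact 0)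
    fun k ↦ (hcompact k).isClosed

lemma mul_prod_le_dist_of_ne (h : IsDustLikeSystem g r) {δ : ℝ}
    (hsep : ∀ i j, i ≠ j → ∀ x y, δ ≤ dist (g i x) (g j y)) {π : (ℕ → ι) → Y}
    (hπ : ∀ x k, π x ∈ Set.range (wordMap g (PiNat.res x k))) {x y : ℕ → ι} (hxy : x ≠ y) :
    δ * ((PiNat.res x (PiNat.firstDiff x y)).map r).prod ≤ dist (π x) (π y) := by
  set k := PiNat.firstDiff x y
  obtain ⟨a, ha⟩ := hπ x (k + 1)
  obtain ⟨b, hb⟩ := hπ y (k + 1)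
  have hres : PiNat.res y k = PiNat.res x k :=
    PiNat.res_eq_res.2 fun i hi ↦ (PiNat.apply_eq_of_lt_firstDiff hi).symm
  rw [PiNat.res_succ] at ha hb
  rw [hres] at hb
  rw [← ha, ← hb]
  simp only [wordMap, Function.comp_apply, h.dist_wordMap]
  rw [mul_comm]
  exact mul_le_mul_of_nonneg_left (hsep _ _ (PiNat.apply_firstDiff_ne hxy) a b)
    (prod_map_pos h.ratio_pos _).le

section Separation

variable [CompactSpace Y] [Finite ι]

lemma exists_pos_forall_le_dist (h : IsDustLikeSystem g r) :
    ∃ δ > 0, ∀ i j, i ≠ j → ∀ x y, δ ≤ dist (g i x) (g j y) := by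
  have hcont (j : ι) : Continuous (g j) := (h.lipschitzWith_wordMap [j]).continuous
  have hpair (i j : ι) : ∀ᶠ δ in nhdsWithin 0 (Set.Ioi 0),
      i ≠ j → ∀ x y, δ ≤ dist (g i x) (g j y) := by
    by_cases hij : i = j
    · simp [hij]
    obtain ⟨δ, hδ, hdist⟩ := Metric.exists_pos_forall_lt_edist (isCompact_range (hcont i))
      (isCompact_range (hcont j)).isClosed (h.disjoint_range hij)
    filter_upwards [Ioo_mem_nhdsGT (NNReal.coe_pos.2 hδ)] with ε hε _ x y
    have hlt := hdist _ ⟨x, rfl⟩ _ ⟨y, rfl⟩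
    rw [edist_nndist, ENNReal.coe_lt_coe, ← NNReal.coe_lt_coe, coe_nndist] at hlt
    exact (hε.2.trans hlt).le
  obtain ⟨δ, hδ, hδ0⟩ := ((Filter.eventually_all.2 fun i ↦ Filter.eventually_all.2 (hpair i)).and
    self_mem_nhdsWithin).exists
  exact ⟨δ, hδ0, hδ⟩

lemma exists_pos_forall_mul_prod_le_dist (h : IsDustLikeSystem g r) :
    ∃ δ > 0, ∀ w, ∀ x ∈ Set.range (wordMap g w), ∀ y ∉ Set.range (wordMap g w),
      δ * (w.map r).prod ≤ dist x y := by
  obtain ⟨δ, hδ, hsep⟩ := h.exists_pos_forall_le_dist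
  refine ⟨δ, hδ, fun w ↦ ?_⟩
  induction w with
  | nil => exact fun x _ y hy ↦ absurd ⟨y, rfl⟩ hy
  | cons j w ih =>
    have hpos := prod_map_pos h.ratio_pos w
    have hle : δ * ((j :: w).map r).prod ≤ δ * (w.map r).prod := by
      rw [List.map_cons, List.prod_cons]
      exact mul_le_mul_of_nonneg_left (mul_le_of_le_one_left hpos.le (h.ratio_lt_one j).le) hδ.le
    intro x hx y hy
    by_cases hyw : y ∈ Set.range (wordMap g w)
    · rw [← h.iUnion_range_wordMap_cons] at hyw
      obtain ⟨i, y, rfl⟩ := Set.mem_iUnion.1 hyw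
      obtain ⟨x, rfl⟩ := hx
      have hji : j ≠ i := by
        rintro rfl
        exact hy ⟨y, rfl⟩
      refine hle.trans ?_
      simp only [wordMap, Function.comp_apply, h.dist_wordMap]
      rw [mul_comm]
      exact mul_le_mul_of_nonneg_left (hsep j i hji x y) hpos.le
    · exact hle.trans (ih x (h.range_wordMap_cons_subset w j hx) y hyw)

end Separation

section Measure

variable [CompactSpace Y] [MeasurableSpace Y] [BorelSpace Y] [Fintype ι]

theorem hausdorffMeasure_univ_ne_top (h : IsDustLikeSystem g r) (hs : 0 < s)
    (hsum : ∑ j, r j ^ s = 1) : μH[s] (Set.univ : Set Y) ≠ ⊤ := by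
  obtain ⟨c, hc0, hc1, hc⟩ := exists_forall_le_and_lt_one h.ratio_pos h.ratio_lt_one
  have hdiam : Metric.ediam (Set.univ : Set Y) ≠ ⊤ := isCompact_univ.isBounded.ediam_ne_top
  have hlim : Filter.Tendsto (fun k : ℕ ↦ ENNReal.ofReal (c ^ k) * Metric.ediam (Set.univ : Set Y))
      Filter.atTop (nhds 0) := by
    have := ENNReal.tendsto_ofReal (tendsto_pow_atTop_nhds_zero_of_lt_one hc0 hc1)
    simpa using ENNReal.Tendsto.mul_const this (.inr hdiam)
  have hle := Measure.hausdorffMeasure_le_liminf_sum s Set.univ _ hlim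
    (fun k (v : Fin k → ι) ↦ Set.range (wordMap g (List.ofFn v)))
    (.of_forall fun k v ↦ (h.ediam_range_wordMap_le _).trans (by
      gcongr
      simpa using prod_map_le_pow_length h.ratio_pos hc (List.ofFn v)))
    (.of_forall fun k ↦ (h.iUnion_range_wordMap_ofFn k).ge)
  refine ne_top_of_le_ne_top (ENNReal.rpow_ne_top_of_nonneg hs.le hdiam) (hle.trans ?_)
  exact (Filter.liminf_le_liminf
    (.of_forall (h.sum_ediam_range_wordMap_rpow_le hs hsum))).trans (Filter.liminf_const _).le

-- Mass distribution principle for the image of the Bernoulli measure with weights `r j ^ s`.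
theorem hausdorffMeasure_univ_ne_zero [Nonempty Y] (h : IsDustLikeSystem g r) (hs : 0 < s)
    (hsum : ∑ j, r j ^ s = 1) : μH[s] (Set.univ : Set Y) ≠ 0 := by
  let _ : MeasurableSpace ι := ⊤
  have hweight_pos (j : ι) : 0 < r j ^ s := Real.rpow_pos_of_pos (h.ratio_pos j) s
  obtain ⟨δ, hδ, hsep⟩ := h.exists_pos_forall_le_dist
  obtain ⟨ν, hν_prob, hν⟩ := exists_measure_cylinder_eq (fun j ↦ (hweight_pos j).le) hsum
  have := nullSingletonClass_of_measure_cylinder_eq hweight_pos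
    (fun j ↦ Real.rpow_lt_one (h.ratio_pos j).le (h.ratio_lt_one j) hs) hν
  choose π hπ using h.exists_forall_mem_range_wordMap_res
  have hmass (S : Set Y) :
      (ENNReal.ofReal δ ^ s • OuterMeasure.map π ν.toOuterMeasure) S ≤ Metric.ediam S ^ s := by
    simp only [_root_.smul_apply, OuterMeasure.map_apply, Measure.coe_toOuterMeasure,
      smul_eq_mul]
    obtain hT | ⟨x, hx, y, hy, hxy, hT⟩ := subsingleton_or_subset_cylinder (π ⁻¹' S)
    · simp [hT.measure_zero ν]
    set P := ((PiNat.res x (PiNat.firstDiff x y)).map r).prod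
    calc ENNReal.ofReal δ ^ s * ν (π ⁻¹' S)
        ≤ ENNReal.ofReal δ ^ s * ENNReal.ofReal P ^ s := by
          gcongr
          refine (measure_mono hT).trans_eq ?_
          rw [hν, prod_map_rpow h.ratio_pos,
            ENNReal.ofReal_rpow_of_pos (prod_map_pos h.ratio_pos _)]
      _ = ENNReal.ofReal (δ * P) ^ s := by
          rw [ENNReal.ofReal_mul hδ.le, ENNReal.mul_rpow_of_nonneg _ _ hs.le]
      _ ≤ Metric.ediam S ^ s := by
          refine ENNReal.rpow_le_rpow ?_ hs.le
          refine (ENNReal.ofReal_le_ofReal (h.mul_prod_le_dist_of_ne hsep hπ hxy)).trans ?_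
          rw [← edist_dist]
          exact Metric.edist_le_ediam_of_mem hx hy
  have hle := le_hausdorffMeasure_of_le_ediam_rpow hmass Set.univ
  refine (lt_of_lt_of_le ?_ hle).ne'
  simpa [hν_prob.measure_univ] using ENNReal.rpow_pos (ENNReal.ofReal_pos.2 hδ)
    ENNReal.ofReal_ne_top

end Measure

end IsDustLikeSystem

end DustLikeSystem

section OverlapSystem

variable {lam ρ c δ δ' : ℝ}

/-- A distance `δ ≥ 0` between the left endpoints of two intervals of length `ρ` which are equal,
or overlap in an interval of length `lam * ρ`, or have at most one common point. -/
def IsOverlapGap (lam ρ δ : ℝ) : Prop :=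
  δ = 0 ∨ δ = ρ * (1 - lam) ∨ ρ ≤ δ

namespace IsOverlapGap

lemma half_le (hlam : lam ≤ 1 / 2) (hρ : 0 < ρ) (h : IsOverlapGap lam ρ δ) (hδ : δ ≠ 0) :
    ρ / 2 ≤ δ := by
  rcases h with h | rfl | h
  · exact absurd h hδ
  · nlinarith
  · linarith

lemma add (hlam : lam ≤ 1 / 2) (hρ : 0 < ρ) (h : IsOverlapGap lam ρ δ)
    (h' : IsOverlapGap lam ρ δ') : IsOverlapGap lam ρ (δ + δ') := by
  rcases eq_or_ne δ 0 with rfl | hδ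
  · rwa [zero_add]
  rcases eq_or_ne δ' 0 with rfl | hδ'
  · rwa [add_zero]
  · exact .inr <| .inr <| by linarith [h.half_le hlam hρ hδ, h'.half_le hlam hρ hδ']

lemma const_mul (hc : 0 ≤ c) (h : IsOverlapGap lam ρ δ) : IsOverlapGap lam (c * ρ) (c * δ) := by
  rcases h with rfl | rfl | h
  · exact .inl (mul_zero c)
  · exact .inr <| .inl (mul_assoc ..).symm
  · exact .inr <| .inr <| mul_le_mul_of_nonneg_left h hc

end IsOverlapGap

/-- A finite set of left endpoints of intervals of length `ρ` any two of which are equal, overlap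
in an interval of length `lam * ρ`, or have at most one common point. -/
def OverlapSpaced (lam ρ : ℝ) (S : Finset ℝ) : Prop :=
  ∀ t ∈ S, ∀ t' ∈ S, t ≤ t' → IsOverlapGap lam ρ (t' - t)

/-- The left endpoints in `S` whose interval of length `ρ` overlaps the one to its left in an
interval of length `lam * ρ`. -/
noncomputable def overlaps (lam ρ : ℝ) (S : Finset ℝ) : Finset ℝ :=
  {t ∈ S | t - ρ * (1 - lam) ∈ S}

/-- The image of `E` under `x ↦ ρ * x + t`. -/
def affineCopy (E : Set ℝ) (ρ t : ℝ) : Set ℝ :=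
  (fun x ↦ ρ * x + t) '' E

/-- The self-similar sets `E = ⋃ b ∈ B, lam • E + b` of the class `𝒜(lam, n, m)`, where
`n = B.card` and `m = (overlaps lam lam B).card`: the translations form a finite set, and the
overlap condition is imposed on all pairs of translations rather than on consecutive ones. -/
structure IsOverlapSystem (lam : ℝ) (B : Finset ℝ) (E : Set ℝ) : Prop where
  pos : 0 < lam
  le_half : lam ≤ 1 / 2
  zero_mem : 0 ∈ B
  one_sub_mem : 1 - lam ∈ B
  subset_Icc : ∀ b ∈ B, b ∈ Set.Icc 0 (1 - lam)
  spaced : OverlapSpaced lam lam B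
  nonempty : E.Nonempty
  isCompact : IsCompact E
  eq_iUnion : E = ⋃ b ∈ B, affineCopy E lam b

lemma dist_mul_add (hρ : 0 ≤ ρ) (t x y : ℝ) :
    dist (ρ * x + t) (ρ * y + t) = ρ * dist x y := by
  rw [dist_add_right, Real.dist_eq, ← mul_sub, abs_mul, abs_of_nonneg hρ, Real.dist_eq]

lemma hausdorffMeasure_real_affineCopy (hρ : 0 < ρ) {s : ℝ} (hs : 0 ≤ s) (E : Set ℝ) (t : ℝ) :
    (μH[s]).real (affineCopy E ρ t) = ρ ^ s * (μH[s]).real E :=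
  hausdorffMeasure_real_image_of_dist_eq_mul hρ hs (dist_mul_add hρ.le t) E

lemma card_overlaps_insert (hlam : lam < 1) (hρ : 0 < ρ) {a : ℝ} {S : Finset ℝ}
    (ha : ∀ t ∈ S, t < a) :
    (overlaps lam ρ (insert a S)).card =
      (overlaps lam ρ S).card + if a - ρ * (1 - lam) ∈ S then 1 else 0 := by
  have hshift : 0 < ρ * (1 - lam) := mul_pos hρ (by linarith)
  have hmem : ∀ t ∈ S, (t - ρ * (1 - lam) ∈ insert a S ↔ t - ρ * (1 - lam) ∈ S) := fun t ht ↦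
    Finset.mem_insert.trans <| or_iff_right (by linarith [ha t ht])
  have ha_mem : a - ρ * (1 - lam) ∈ insert a S ↔ a - ρ * (1 - lam) ∈ S :=
    Finset.mem_insert.trans <| or_iff_right (by linarith)
  have haS : a ∉ S := fun h ↦ lt_irrefl a (ha a h)
  simp only [overlaps, Finset.filter_insert, ha_mem, Finset.filter_congr hmem]
  split_ifs with h
  · exact Finset.card_insert_of_notMem fun h ↦ haS (Finset.mem_filter.1 h).1
  · rw [add_zero]

namespace IsOverlapSystem

variable {B S : Finset ℝ} {E : Set ℝ} {s x b : ℝ}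

lemma lt_one (h : IsOverlapSystem lam B E) : lam < 1 := by
  linarith [h.le_half]

lemma mul_add_mem (h : IsOverlapSystem lam B E) (hx : x ∈ E) (hb : b ∈ B) : lam * x + b ∈ E := by
  rw [h.eq_iUnion]
  exact Set.mem_biUnion hb ⟨x, hx, rfl⟩

lemma mul_mem (h : IsOverlapSystem lam B E) (hx : x ∈ E) : lam * x ∈ E :=
  add_zero (lam * x) ▸ h.mul_add_mem hx h.zero_mem

lemma exists_eq_mul_add (h : IsOverlapSystem lam B E) (hx : x ∈ E) :
    ∃ b ∈ B, ∃ y ∈ E, x = lam * y + b := by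
  rw [h.eq_iUnion] at hx
  obtain ⟨b, hb, y, hy, rfl⟩ := Set.mem_iUnion₂.1 hx
  exact ⟨b, hb, y, hy, rfl⟩

lemma subset_unitInterval (h : IsOverlapSystem lam B E) : E ⊆ Set.Icc 0 1 := by
  have hlam := h.pos
  have hlam1 := h.lt_one
  intro x hx
  obtain ⟨u, hu, hmin⟩ := h.isCompact.exists_isLeast h.nonempty
  obtain ⟨v, hv, hmax⟩ := h.isCompact.exists_isGreatest h.nonempty
  obtain ⟨b, hb, y, hy, rfl⟩ := h.exists_eq_mul_add hu
  obtain ⟨b', hb', y', hy', rfl⟩ := h.exists_eq_mul_add hv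
  have hb0 := (h.subset_Icc b hb).1
  have hb1 := (h.subset_Icc b' hb').2
  constructor
  · nlinarith [hmin hx, hmin hy]
  · nlinarith [hmax hx, hmax hy']

lemma one_mem (h : IsOverlapSystem lam B E) : (1 : ℝ) ∈ E := by
  obtain ⟨x, hx⟩ := h.nonempty
  have hiter (k : ℕ) : 1 - lam ^ k * (1 - x) ∈ E := by
    induction k with
    | zero => simpa using hx
    | succ k ih =>
      convert h.mul_add_mem ih h.one_sub_mem using 1
      ring
  have hlim : Filter.Tendsto (fun k : ℕ ↦ 1 - lam ^ k * (1 - x)) Filter.atTop (nhds 1) := by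
    simpa using ((tendsto_pow_atTop_nhds_zero_of_lt_one h.pos.le h.lt_one).mul_const
      (1 - x)).const_sub 1
  exact h.isCompact.isClosed.mem_of_tendsto hlim (.of_forall hiter)

/- If `x ≤ lam` lies in the copy at `b ≠ 0`, then `b = lam * (1 - lam)` unless `x = lam`, and the
preimage of `x` in that copy again violates the conclusion if `x` does. Iterating, `x` is
arbitrarily close to `lam`. -/
lemma exists_eq_mul_of_le (h : IsOverlapSystem lam B E) (hx : x ∈ E) (hxlam : x ≤ lam) :
    ∃ z ∈ E, x = lam * z := by
  have hlam := h.pos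
  by_contra hcon
  have hclose (k : ℕ) : ∀ x ∈ E, x ≤ lam → (¬∃ z ∈ E, x = lam * z) → lam - x ≤ lam ^ k := by
    induction k with
    | zero =>
      intro x hx _ _
      linarith [(h.subset_unitInterval hx).1, h.lt_one, pow_zero lam]
    | succ k ih =>
      intro x hx hxlam hcon
      obtain ⟨b, hb, y, hy, rfl⟩ := h.exists_eq_mul_add hx
      have hy0 := (h.subset_unitInterval hy).1
      rcases h.spaced 0 h.zero_mem b hb (h.subset_Icc b hb).1 with hb0 | hb1 | hb2
      · exact absurd ⟨y, hy, by linarith⟩ hcon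
      · have hyz : ¬∃ z ∈ E, y = lam * z := by
          rintro ⟨z, hz, rfl⟩
          exact hcon ⟨_, h.mul_add_mem hz h.one_sub_mem, by linarith⟩
        have := ih y hy (by nlinarith) hyz
        rw [pow_succ]
        nlinarith
      · exact absurd ⟨1, h.one_mem, by nlinarith⟩ hcon
  have hle : lam - x ≤ 0 := ge_of_tendsto'
    (tendsto_pow_atTop_nhds_zero_of_lt_one hlam.le h.lt_one) fun k ↦ hclose k x hx hxlam hcon
  exact hcon ⟨1, h.one_mem, by linarith⟩

lemma isCompact_affineCopy (h : IsOverlapSystem lam B E) (ρ t : ℝ) :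
    IsCompact (affineCopy E ρ t) :=
  h.isCompact.image (by fun_prop)

lemma affineCopy_inter_affineCopy_overlap (h : IsOverlapSystem lam B E) (hρ : 0 < ρ) (a : ℝ) :
    affineCopy E ρ a ∩ affineCopy E ρ (a - ρ * (1 - lam)) = affineCopy E (ρ * lam) a := by
  apply Set.Subset.antisymm
  · rintro _ ⟨⟨x, hx, rfl⟩, y, hy, hxy⟩
    have hyx : y = x + (1 - lam) := mul_left_cancel₀ hρ.ne' (by linarith)
    obtain ⟨z, hz, rfl⟩ := h.exists_eq_mul_of_le hx (by linarith [(h.subset_unitInterval hy).2])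
    exact ⟨z, hz, by ring⟩
  · rintro _ ⟨z, hz, rfl⟩
    exact ⟨⟨lam * z, h.mul_mem hz, by ring⟩,
      lam * z + (1 - lam), h.mul_add_mem hz h.one_sub_mem, by ring⟩

lemma affineCopy_inter_affineCopy_subset (h : IsOverlapSystem lam B E) (hρ : 0 < ρ) {a t : ℝ}
    (hat : ρ ≤ a - t) : affineCopy E ρ a ∩ affineCopy E ρ t ⊆ {a} := by
  rintro _ ⟨⟨x, hx, rfl⟩, y, hy, hxy⟩
  have hx0 := (h.subset_unitInterval hx).1
  have hy1 := (h.subset_unitInterval hy).2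
  simp only [Set.mem_singleton_iff] at hxy ⊢
  nlinarith

lemma affineCopy_inter_iUnion_subset (h : IsOverlapSystem lam B E) (hρ : 0 < ρ) {a : ℝ}
    (hS : OverlapSpaced lam ρ (insert a S)) (ha : ∀ t ∈ S, t < a) :
    affineCopy E ρ a ∩ ⋃ t ∈ S, affineCopy E ρ t ⊆
      {x ∈ affineCopy E (ρ * lam) a | a - ρ * (1 - lam) ∈ S} ∪ {a} := by
  rintro y ⟨hya, hyS⟩
  obtain ⟨t, ht, hyt⟩ := Set.mem_iUnion₂.1 hyS
  rcases hS t (Finset.mem_insert_of_mem ht) a (Finset.mem_insert_self a S) (ha t ht).le with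
    hgap | hgap | hgap
  · exact absurd (ha t ht) (by linarith)
  · obtain rfl : t = a - ρ * (1 - lam) := by linarith
    exact .inl ⟨h.affineCopy_inter_affineCopy_overlap hρ a ▸ ⟨hya, hyt⟩, ht⟩
  · exact .inr (h.affineCopy_inter_affineCopy_subset hρ hgap ⟨hya, hyt⟩)

lemma hausdorffMeasure_real_affineCopy_inter_iUnion (h : IsOverlapSystem lam B E) (hs : 0 < s)
    (hρ : 0 < ρ) {a : ℝ} (hS : OverlapSpaced lam ρ (insert a S)) (ha : ∀ t ∈ S, t < a) :
    (μH[s]).real (affineCopy E ρ a ∩ ⋃ t ∈ S, affineCopy E ρ t) =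
      if a - ρ * (1 - lam) ∈ S then (ρ * lam) ^ s * (μH[s]).real E else 0 := by
  have := Measure.nullSingletonClass_hausdorff ℝ hs
  have hsub := h.affineCopy_inter_iUnion_subset hρ hS ha
  split_ifs with hmem
  · rw [← hausdorffMeasure_real_affineCopy (mul_pos hρ h.pos) hs.le E a,
      measureReal_def, measureReal_def]
    congr 1
    refine le_antisymm ?_ (measure_mono ?_)
    · refine (measure_mono (hsub.trans (Set.union_subset_union_left _ (Set.sep_subset ..)))).trans
        ((measure_union_le _ _).trans ?_)
      rw [measure_singleton, add_zero]
    · rw [← h.affineCopy_inter_affineCopy_overlap hρ a]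
      exact Set.inter_subset_inter_right _ (Set.subset_biUnion_of_mem (u := affineCopy E ρ) hmem)
  · rw [measureReal_def, measure_mono_null (hsub.trans (by simp [hmem])) (measure_singleton a),
      ENNReal.toReal_zero]

lemma hausdorffMeasure_real_iUnion_affineCopy (h : IsOverlapSystem lam B E) (hs : 0 < s)
    (hfin : μH[s] E ≠ ⊤) (hρ : 0 < ρ) (hS : OverlapSpaced lam ρ S) :
    (μH[s]).real (⋃ t ∈ S, affineCopy E ρ t) =
      ρ ^ s * (μH[s]).real E * (S.card - lam ^ s * (overlaps lam ρ S).card) := by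
  have hne (t : ℝ) : μH[s] (affineCopy E ρ t) ≠ ⊤ := by
    rw [affineCopy, hausdorffMeasure_image_of_dist_eq_mul hρ hs.le (dist_mul_add hρ.le t)]
    exact ENNReal.mul_ne_top ENNReal.ofReal_ne_top hfin
  induction S using Finset.induction_on_max with
  | empty => simp [overlaps]
  | insert a S ha ih =>
    have hcompact : IsCompact (⋃ t ∈ S, affineCopy E ρ t) :=
      S.isCompact_biUnion fun t _ ↦ h.isCompact_affineCopy ρ t
    have hunion := measureReal_union_add_inter (s := affineCopy E ρ a)
      hcompact.isClosed.measurableSet (hne a)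
      ((measure_biUnion_lt_top S.finite_toSet fun t _ ↦ (hne t).lt_top).ne)
    rw [h.hausdorffMeasure_real_affineCopy_inter_iUnion hs hρ hS ha,
      hausdorffMeasure_real_affineCopy hρ hs.le,
      ih fun t ht t' ht' ↦ hS t (Finset.mem_insert_of_mem ht) t' (Finset.mem_insert_of_mem ht'),
      Real.mul_rpow hρ.le h.pos.le] at hunion
    rw [Finset.set_biUnion_insert, card_overlaps_insert h.lt_one hρ ha,
      Finset.card_insert_of_notMem fun h ↦ lt_irrefl a (ha a h)]
    split_ifs at hunion ⊢ <;> push_cast <;> linear_combination hunion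

lemma card_mul_sub_card_overlaps_mul_sq_eq_one (h : IsOverlapSystem lam B E) (hs : 0 < s)
    (hfin : μH[s] E ≠ ⊤) (hpos : μH[s] E ≠ 0) :
    1 = B.card * lam ^ s - (overlaps lam lam B).card * (lam ^ s) ^ 2 := by
  have hmeasure := h.hausdorffMeasure_real_iUnion_affineCopy hs hfin h.pos h.spaced
  rw [← h.eq_iUnion] at hmeasure
  refine mul_left_cancel₀ (ENNReal.toReal_pos hpos hfin).ne' ?_
  rw [← measureReal_def]
  linear_combination hmeasure

lemma overlapSpaced_image₂ (h : IsOverlapSystem lam B E) (hρ : 0 < ρ)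
    (hS : OverlapSpaced lam ρ S) :
    OverlapSpaced lam (ρ * lam) (Finset.image₂ (fun t b ↦ t + ρ * b) S B) := by
  have hρlam := mul_pos hρ h.pos
  have hsib {b b' : ℝ} (hb : b ∈ B) (hb' : b' ∈ B) (hle : b ≤ b') :
      IsOverlapGap lam (ρ * lam) (ρ * (b' - b)) :=
    (h.spaced b hb b' hb' hle).const_mul hρ.le
  have hwidth {b : ℝ} (hb : b ∈ B) : 0 ≤ ρ * b ∧ ρ * b ≤ ρ * (1 - lam) :=
    ⟨mul_nonneg hρ.le (h.subset_Icc b hb).1,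
      mul_le_mul_of_nonneg_left (h.subset_Icc b hb).2 hρ.le⟩
  intro u hu u' hu' hle
  obtain ⟨t, ht, b, hb, rfl⟩ := Finset.mem_image₂.1 hu
  obtain ⟨t', ht', b', hb', rfl⟩ := Finset.mem_image₂.1 hu'
  rcases lt_trichotomy t t' with htt' | rfl | htt'
  · rcases hS t ht t' ht' htt'.le with hgap | hgap | hgap
    · linarith
    · convert (hsib hb h.one_sub_mem (h.subset_Icc b hb).2).add h.le_half hρlam
        (hsib h.zero_mem hb' (h.subset_Icc b' hb').1) using 1
      linear_combination hgap
    · exact .inr <| .inr <| by linarith [(hwidth hb).2, (hwidth hb').1]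
  · convert hsib hb hb' (le_of_mul_le_mul_left (by linarith) hρ) using 1
    ring
  · refine .inl (le_antisymm ?_ (by linarith))
    rcases hS t' ht' t ht htt'.le with hgap | hgap | hgap
    · linarith
    · linarith [(hwidth hb).1, (hwidth hb').2]
    · linarith [(hwidth hb).1, (hwidth hb').2, hρlam]

lemma iUnion_image₂_affineCopy (h : IsOverlapSystem lam B E) (ρ : ℝ) (S : Finset ℝ) :
    ⋃ u ∈ Finset.image₂ (fun t b ↦ t + ρ * b) S B, affineCopy E (ρ * lam) u =
      ⋃ t ∈ S, affineCopy E ρ t := by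
  ext x
  simp only [Set.mem_iUnion₂, exists_prop, Finset.mem_image₂]
  constructor
  · rintro ⟨_, ⟨t, ht, b, hb, rfl⟩, y, hy, rfl⟩
    exact ⟨t, ht, lam * y + b, h.mul_add_mem hy hb, by ring⟩
  · rintro ⟨t, ht, y, hy, rfl⟩
    obtain ⟨b, hb, z, hz, rfl⟩ := h.exists_eq_mul_add hy
    exact ⟨_, ⟨t, ht, b, hb, rfl⟩, z, hz, by ring⟩

lemma exists_overlapSpaced_iUnion_eq (h : IsOverlapSystem lam B E) (l : ℕ) :
    ∃ S, OverlapSpaced lam (lam ^ l) S ∧ ⋃ t ∈ S, affineCopy E (lam ^ l) t = E := by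
  induction l with
  | zero => exact ⟨{0}, by simp [OverlapSpaced, IsOverlapGap], by simp [affineCopy]⟩
  | succ l ih =>
    obtain ⟨S, hS, hSE⟩ := ih
    exact ⟨_, pow_succ lam l ▸ h.overlapSpaced_image₂ (pow_pos h.pos l) hS,
      pow_succ lam l ▸ (h.iUnion_image₂_affineCopy (lam ^ l) S).trans hSE⟩

end IsOverlapSystem

lemma OverlapSpaced.card_le (hlam : lam ≤ 1 / 2) (hρ : 0 < ρ) {S : Finset ℝ}
    (hS : OverlapSpaced lam ρ S) {x₀ R : ℝ} (hR : ∀ t ∈ S, |t - x₀| ≤ R * ρ) :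
    S.card ≤ (Finset.Icc (-⌈2 * R⌉) ⌈2 * R⌉).card := by
  have hceil := Int.le_ceil (2 * R)
  refine Finset.card_le_card_of_injOn (fun t ↦ ⌊2 * ((t - x₀) / ρ)⌋) (fun t ht ↦ ?_) ?_
  · have hscaled : |(t - x₀) / ρ| ≤ R := by
      rw [abs_div, abs_of_pos hρ, div_le_iff₀ hρ]
      exact hR t ht
    rw [Finset.mem_coe, Finset.mem_Icc, Int.le_floor, ← @Int.cast_le ℝ]
    push_cast
    constructor <;> linarith [abs_le.1 hscaled, Int.floor_le (2 * ((t - x₀) / ρ))]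
  · have hle : ∀ t ∈ S, ∀ t' ∈ S, t ≤ t' →
        ⌊2 * ((t - x₀) / ρ)⌋ = ⌊2 * ((t' - x₀) / ρ)⌋ → t = t' := by
      intro t ht t' ht' htt' hfloor
      by_contra hne
      have hgap := (hS t ht t' ht' htt').half_le hlam hρ (sub_ne_zero.2 (Ne.symm hne))
      have hlt := (abs_lt.1 (Int.abs_sub_lt_one_of_floor_eq_floor hfloor)).1
      have hdiv : 2 * ((t - x₀) / ρ) - 2 * ((t' - x₀) / ρ) = -(2 * (t' - t) / ρ) := by ring
      have : 1 ≤ 2 * (t' - t) / ρ := by rw [le_div_iff₀ hρ]; linarith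
      linarith
    intro t ht t' ht' hfloor
    rcases le_total t t' with htt' | htt'
    · exact hle t ht t' ht' htt' hfloor
    · exact (hle t' ht' t ht htt' hfloor.symm).symm

namespace IsOverlapSystem

variable {B : Finset ℝ} {E : Set ℝ} {s : ℝ}

lemma dist_le_of_mem_affineCopy (h : IsOverlapSystem lam B E) (hρ : 0 ≤ ρ) {t x y : ℝ}
    (hx : x ∈ affineCopy E ρ t) (hy : y ∈ affineCopy E ρ t) : dist x y ≤ ρ := by
  obtain ⟨u, hu, rfl⟩ := hx
  obtain ⟨v, hv, rfl⟩ := hy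
  rw [dist_mul_add hρ]
  refine mul_le_of_le_one_right hρ ?_
  simpa using Real.dist_le_of_mem_Icc (h.subset_unitInterval hu) (h.subset_unitInterval hv)

lemma abs_sub_le_of_mem_affineCopy (h : IsOverlapSystem lam B E) (hρ : 0 ≤ ρ) {t x : ℝ}
    (hx : x ∈ affineCopy E ρ t) : |t - x| ≤ ρ := by
  obtain ⟨u, hu, rfl⟩ := hx
  have hu01 := h.subset_unitInterval hu
  rw [sub_add_cancel_right, abs_neg, abs_of_nonneg (mul_nonneg hρ hu01.1)]
  exact mul_le_of_le_one_right hρ hu01.2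

lemma exists_iUnion_affineCopy_eq_of_separated (h : IsOverlapSystem lam B E) (l : ℕ) {A : Set ℝ}
    (hAE : A ⊆ E) (hsep : ∀ x ∈ A, ∀ y ∈ E, y ∉ A → lam ^ l < dist x y) :
    ∃ S, OverlapSpaced lam (lam ^ l) S ∧ ⋃ t ∈ S, affineCopy E (lam ^ l) t = A ∧
      ∀ t ∈ S, (affineCopy E (lam ^ l) t ∩ A).Nonempty := by
  classical
  obtain ⟨T, hT, hTE⟩ := h.exists_overlapSpaced_iUnion_eq l
  refine ⟨{t ∈ T | (affineCopy E (lam ^ l) t ∩ A).Nonempty},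
    fun t ht t' ht' ↦ hT t (Finset.mem_filter.1 ht).1 t' (Finset.mem_filter.1 ht').1,
    Set.Subset.antisymm ?_ fun x hx ↦ ?_, fun t ht ↦ (Finset.mem_filter.1 ht).2⟩
  · refine Set.iUnion₂_subset fun t ht x hx ↦ ?_
    obtain ⟨htT, y, hyt, hyA⟩ := Finset.mem_filter.1 ht
    by_contra hxA
    exact (hsep y hyA x (hTE ▸ Set.mem_biUnion htT hx) hxA).not_ge
      (h.dist_le_of_mem_affineCopy (pow_pos h.pos l).le hyt hx)
  · obtain ⟨t, ht, hxt⟩ := Set.mem_iUnion₂.1 (hTE.symm ▸ hAE hx)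
    exact Set.mem_biUnion (Finset.mem_filter.2 ⟨ht, x, hxt, hx⟩) hxt

lemma exists_hausdorffMeasure_real_eq_of_separated (h : IsOverlapSystem lam B E) (hs : 0 < s)
    (hfin : μH[s] E ≠ ⊤) (R : ℝ) :
    ∃ N : ℕ, ∀ (l : ℕ) (A : Set ℝ), A ⊆ E → A.Nonempty →
      (∀ x ∈ A, ∀ y ∈ E, y ∉ A → lam ^ l < dist x y) →
      (∀ x ∈ A, ∀ y ∈ A, dist x y ≤ R * lam ^ l) →
      ∃ a ≤ N, ∃ b ≤ N, (μH[s]).real A =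
        (lam ^ s) ^ l * ((μH[s]).real E * (a - lam ^ s * b)) := by
  refine ⟨(Finset.Icc (-⌈2 * (R + 1)⌉) ⌈2 * (R + 1)⌉).card, ?_⟩
  rintro l A hAE ⟨x₀, hx₀⟩ hsep hdiam
  have hpow := pow_pos h.pos l
  obtain ⟨S, hS, hSA, hmeets⟩ := h.exists_iUnion_affineCopy_eq_of_separated l hAE hsep
  have hnear : ∀ t ∈ S, |t - x₀| ≤ (R + 1) * lam ^ l := by
    intro t ht
    obtain ⟨y, hyt, hyA⟩ := hmeets t ht
    have hyx := hdiam y hyA x₀ hx₀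
    rw [Real.dist_eq] at hyx
    linarith [abs_sub_le t y x₀, h.abs_sub_le_of_mem_affineCopy hpow.le hyt]
  have hcard := hS.card_le h.le_half hpow hnear
  refine ⟨S.card, hcard, (overlaps lam (lam ^ l) S).card,
    (Finset.card_filter_le ..).trans hcard, ?_⟩
  rw [← hSA, h.hausdorffMeasure_real_iUnion_affineCopy hs hfin hpow hS,
    ← Real.rpow_pow_comm h.pos.le, mul_assoc]

end IsOverlapSystem

end OverlapSystem

section ClassA

variable {lam x y : ℝ} {n m : ℕ} {b : ℕ → ℝ}

lemma volume_Icc_inter_Icc_add (hxy : x ≤ y) :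
    volume (Set.Icc x (x + lam) ∩ Set.Icc y (y + lam)) = ENNReal.ofReal (lam - (y - x)) := by
  rw [Set.Icc_inter_Icc, sup_eq_right.2 hxy, inf_eq_left.2 (by linarith), Real.volume_Icc]
  ring_nf

lemma volume_Icc_inter_Icc_add_eq_iff (hlam : 0 < lam) (hxy : x ≤ y) :
    volume (Set.Icc x (x + lam) ∩ Set.Icc y (y + lam)) = ENNReal.ofReal (lam * lam) ↔
      y - x = lam * (1 - lam) := by
  have hsq := mul_pos hlam hlam
  rw [volume_Icc_inter_Icc_add hxy]
  constructor <;> intro h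
  · have hpos : 0 < lam - (y - x) := ENNReal.ofReal_pos.1 (h ▸ ENNReal.ofReal_pos.2 hsq)
    linarith [(ENNReal.ofReal_eq_ofReal_iff hpos.le hsq.le).1 h]
  · congr 1
    linarith

lemma isOverlapGap_of_volume (hlam : 0 < lam) (hxy : x ≤ y)
    (h : (Set.Icc x (x + lam) ∩ Set.Icc y (y + lam)).Nonempty →
      volume (Set.Icc x (x + lam) ∩ Set.Icc y (y + lam)) = 0 ∨
        volume (Set.Icc x (x + lam) ∩ Set.Icc y (y + lam)) = ENNReal.ofReal (lam * lam)) :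
    IsOverlapGap lam lam (y - x) := by
  rcases le_or_gt lam (y - x) with hle | hlt
  · exact .inr (.inr hle)
  rcases h ⟨y, ⟨hxy, by linarith⟩, ⟨le_rfl, by linarith⟩⟩ with h | h
  · rw [volume_Icc_inter_Icc_add hxy, ENNReal.ofReal_eq_zero] at h
    linarith
  · exact .inr (.inl ((volume_Icc_inter_Icc_add_eq_iff hlam hxy).1 h))

lemma isOverlapGap_sub_of_succ (hhalf : lam ≤ 1 / 2) {ρ : ℝ} (hρ : 0 < ρ)
    (hgap : ∀ i, i + 1 < n → IsOverlapGap lam ρ (b (i + 1) - b i)) {i j : ℕ} (hij : i ≤ j)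
    (hj : j < n) : IsOverlapGap lam ρ (b j - b i) := by
  induction j, hij using Nat.le_induction with
  | base => exact .inl (sub_self (b i))
  | succ j _ ih =>
    rw [← sub_add_sub_cancel]
    exact (hgap j hj).add hhalf hρ (ih (by omega))

lemma eq_add_one_of_sub_eq (hlam : 0 < lam) (hhalf : lam ≤ 1 / 2)
    (hmono : StrictMonoOn b (Set.Iio n))
    (hgap : ∀ i, i + 1 < n → IsOverlapGap lam lam (b (i + 1) - b i)) {i j : ℕ} (hi : i < n)
    (hj : j < n) (hsub : b j - b i = lam * (1 - lam)) : j = i + 1 := by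
  have hij : i < j := (hmono.lt_iff_lt hi hj).1 (by nlinarith)
  by_contra hne
  have hij' : i + 1 < j := lt_of_le_of_ne hij (Ne.symm hne)
  have hleft := (hgap i (by omega)).half_le hhalf hlam
    (sub_pos.2 (hmono hi (by simp; omega) i.lt_succ_self)).ne'
  have hright := (isOverlapGap_sub_of_succ hhalf hlam hgap hij'.le hj).half_le hhalf hlam
    (sub_pos.2 (hmono (by simp; omega) hj hij')).ne'
  nlinarith

lemma card_overlaps_image_range (hlam : 0 < lam) (hhalf : lam ≤ 1 / 2)
    (hmono : StrictMonoOn b (Set.Iio n))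
    (hgap : ∀ i, i + 1 < n → IsOverlapGap lam lam (b (i + 1) - b i)) :
    (overlaps lam lam ((Finset.range n).image b)).card =
      {i | i + 1 < n ∧ b (i + 1) - b i = lam * (1 - lam)}.ncard := by
  rw [← Set.ncard_coe_finset]
  refine (Set.ncard_congr (fun i _ ↦ b (i + 1)) ?_ ?_ ?_).symm
  · rintro i ⟨hi, hsub⟩
    simp only [overlaps, Finset.coe_filter, Set.mem_ofPred_eq, Finset.mem_image, Finset.mem_range]
    exact ⟨⟨i + 1, hi, rfl⟩, i, by omega, by linarith⟩
  · rintro i j ⟨hi, _⟩ ⟨hj, _⟩ h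
    exact Nat.succ_injective (hmono.injOn hi hj h)
  · intro x hx
    simp only [overlaps, Finset.coe_filter, Set.mem_ofPred_eq, Finset.mem_image,
      Finset.mem_range] at hx
    obtain ⟨⟨j, hj, rfl⟩, i, hi, hsub⟩ := hx
    obtain rfl := eq_add_one_of_sub_eq hlam hhalf hmono hgap hi hj (by linarith)
    exact ⟨i, ⟨hj, by linarith⟩, rfl⟩

lemma le_half_of_ncard_lt (hmono : MonotoneOn b (Set.Iio n)) (h0 : b 0 = 0)
    (hlast : b (n - 1) = 1 - lam)
    (hgap : ∀ i, i + 1 < n → b (i + 1) - b i = lam * (1 - lam) ∨ lam ≤ b (i + 1) - b i)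
    (hcard : {i | i + 1 < n ∧ b (i + 1) - b i = lam * (1 - lam)}.ncard < n - 1) :
    lam ≤ 1 / 2 := by
  obtain ⟨i, hi, hle⟩ : ∃ i, i + 1 < n ∧ lam ≤ b (i + 1) - b i := by
    by_contra! hlt
    have hall : {i | i + 1 < n ∧ b (i + 1) - b i = lam * (1 - lam)} = Finset.range (n - 1) := by
      ext i
      simp only [Set.mem_ofPred_eq, Finset.coe_range, Set.mem_Iio, Nat.lt_sub_iff_add_lt]
      exact and_iff_left_of_imp fun hi ↦ (hgap i hi).resolve_right (hlt i hi).not_ge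
    rw [hall, Set.ncard_coe_finset, Finset.card_range] at hcard
    exact lt_irrefl _ hcard
  have hfirst := hmono (by simp; omega) (by simp; omega) i.zero_le
  have hend := hmono (Set.mem_Iio.2 hi) (by simp; omega) (Nat.le_sub_one_of_lt hi)
  linarith

theorem IsInClassA.exists_isOverlapSystem {E : Set ℝ} (hE : IsInClassA lam n m E) :
    ∃ B, IsOverlapSystem lam B E ∧ B.card = n ∧ (overlaps lam lam B).card = m := by
  obtain ⟨⟨hlam, -⟩, hm, hmn, b, h0, hlast, hlt, hvol, hcard, hne, hcompact, hE⟩ := hE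
  have hmono : StrictMonoOn b (Set.Iio n) :=
    strictMonoOn_of_lt_succ Set.ordConnected_Iio fun i _ _ hi ↦ hlt i hi
  have hgap (i : ℕ) (hi : i + 1 < n) : IsOverlapGap lam lam (b (i + 1) - b i) :=
    isOverlapGap_of_volume hlam (hlt i hi).le (hvol i hi)
  have hcard : {i | i + 1 < n ∧ b (i + 1) - b i = lam * (1 - lam)}.ncard = m := by
    rw [← hcard]
    congr! 3 with i
    exact and_congr_right fun hi ↦ (volume_Icc_inter_Icc_add_eq_iff hlam (hlt i hi).le).symm
  have hhalf : lam ≤ 1 / 2 := le_half_of_ncard_lt hmono.monotoneOn h0 hlast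
    (fun i hi ↦ (hgap i hi).resolve_left (sub_pos.2 (hlt i hi)).ne') (by omega)
  refine ⟨(Finset.range n).image b, ⟨hlam, hhalf, ?_, ?_, ?_, ?_, hne, hcompact, ?_⟩, ?_, ?_⟩
  · exact Finset.mem_image.2 ⟨0, Finset.mem_range.2 (by omega), h0⟩
  · exact Finset.mem_image.2 ⟨n - 1, Finset.mem_range.2 (by omega), hlast⟩
  · refine Finset.forall_mem_image.2 fun i hi ↦ ?_
    have hi := Finset.mem_range.1 hi
    rw [← h0, ← hlast]
    exact ⟨hmono.monotoneOn (by simp; omega) hi i.zero_le,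
      hmono.monotoneOn hi (by simp; omega) (Nat.le_sub_one_of_lt hi)⟩
  · refine Finset.forall_mem_image.2 fun i hi ↦ Finset.forall_mem_image.2 fun j hj hij ↦ ?_
    have hj := Finset.mem_range.1 hj
    exact isOverlapGap_sub_of_succ hhalf hlam hgap
      ((hmono.le_iff_le (Finset.mem_range.1 hi) hj).1 hij) hj
  · rw [Finset.set_biUnion_finset_image]
    exact hE
  · rw [Finset.card_image_of_injOn (by simpa using hmono.injOn), Finset.card_range]
  · rw [card_overlaps_image_range hlam hhalf hmono hgap, hcard]

end ClassA

section LipschitzImage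

variable {ι Y : Type*} [MetricSpace Y] {g : ι → Y → Y} {r : ι → ℝ} {φ : Y → ℝ} {K : NNReal}
  {s lam : ℝ}

lemma exists_level_of_prod [Finite ι] (hlam : 0 < lam) (hlam1 : lam < 1) (hr : ∀ j, 0 < r j)
    (hr1 : ∀ j, r j < 1) {c : ℝ} (hc : 0 < c) (hc1 : c ≤ 1) :
    ∃ (l : List ι → ℕ) (D : ℕ), ∀ w, lam ^ l w < c * (w.map r).prod ∧
      c * (w.map r).prod * lam ≤ lam ^ l w ∧ ∀ j, l w ≤ l (j :: w) ∧ l (j :: w) ≤ l w + D := by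
  have hlevel (w : List ι) : ∃ k : ℕ, lam ^ (k + 1) < c * (w.map r).prod ∧
      c * (w.map r).prod ≤ lam ^ k :=
    exists_nat_pow_near_of_lt_one (mul_pos hc (prod_map_pos hr w))
      (mul_le_one₀ hc1 (prod_map_pos hr w).le
        (by simpa using prod_map_le_pow_length hr (fun j ↦ (hr1 j).le) w))
      hlam hlam1
  choose k hlt hle using hlevel
  have hle' (w : List ι) : c * (w.map r).prod * lam ≤ lam ^ (k w + 1) := by
    rw [pow_succ]
    exact mul_le_mul_of_nonneg_right (hle w) hlam.le
  obtain ⟨D, hD⟩ : ∃ D : ℕ, ∀ j, lam ^ D < r j * lam := by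
    have (j : ι) : ∀ᶠ D : ℕ in Filter.atTop, lam ^ D < r j * lam :=
      (tendsto_pow_atTop_nhds_zero_of_lt_one hlam.le hlam1).eventually_lt_const
        (mul_pos (hr j) hlam)
    exact (Filter.eventually_all.2 this).exists
  refine ⟨fun w ↦ k w + 1, D, fun w ↦ ⟨hlt w, hle' w, fun j ↦ ⟨?_, ?_⟩⟩⟩
  · refine Nat.lt_succ_iff.1 ((pow_lt_pow_iff_right_of_lt_one₀ hlam hlam1).1 ?_)
    calc lam ^ (k (j :: w) + 1 + 1)
        < c * ((j :: w).map r).prod * lam := by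
          rw [pow_succ]
          exact mul_lt_mul_of_pos_right (hlt _) hlam
      _ = r j * (c * (w.map r).prod * lam) := by rw [List.map_cons, List.prod_cons]; ring
      _ ≤ 1 * lam ^ (k w + 1) :=
          mul_le_mul (hr1 j).le (hle' w)
            (mul_nonneg (mul_pos hc (prod_map_pos hr w)).le hlam.le) zero_le_one
      _ = lam ^ (k w + 1) := one_mul _
  · refine ((pow_lt_pow_iff_right_of_lt_one₀ hlam hlam1).1 ?_).le
    calc lam ^ (k w + 1 + D)
        < c * (w.map r).prod * (r j * lam) := by
          rw [pow_add]
          exact mul_lt_mul'' (hlt w) (hD j) (pow_pos hlam _).le (pow_pos hlam _).le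
      _ = c * ((j :: w).map r).prod * lam := by rw [List.map_cons, List.prod_cons]; ring
      _ ≤ lam ^ (k (j :: w) + 1) := hle' _

namespace IsDustLikeSystem

section Measure

variable [MeasurableSpace Y] [BorelSpace Y]

lemma hausdorffMeasure_range_wordMap (h : IsDustLikeSystem g r) (hs : 0 ≤ s) (w : List ι) :
    μH[s] (Set.range (wordMap g w)) =
      ENNReal.ofReal ((w.map r).prod ^ s) * μH[s] (Set.univ : Set Y) := by
  rw [← Set.image_univ,
    hausdorffMeasure_image_of_dist_eq_mul (prod_map_pos h.ratio_pos w) hs (h.dist_wordMap w)]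

lemma hausdorffMeasure_image_range_wordMap_ne_zero (h : IsDustLikeSystem g r)
    (hφ : AntilipschitzWith K φ) (hs : 0 ≤ s) (hpos : μH[s] (Set.univ : Set Y) ≠ 0)
    (w : List ι) : μH[s] (φ '' Set.range (wordMap g w)) ≠ 0 := by
  intro hzero
  have hle := hφ.le_hausdorffMeasure_image hs (Set.range (wordMap g w))
  rw [hzero, mul_zero, nonpos_iff_eq_zero, h.hausdorffMeasure_range_wordMap hs] at hle
  exact mul_ne_zero
    (ENNReal.ofReal_pos.2 (Real.rpow_pos_of_pos (prod_map_pos h.ratio_pos w) s)).ne' hpos hle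

lemma hausdorffMeasure_real_image_range_wordMap_le (h : IsDustLikeSystem g r)
    (hφ : LipschitzWith K φ) (hs : 0 ≤ s) (hfin : μH[s] (Set.univ : Set Y) ≠ ⊤) (w : List ι) :
    (μH[s]).real (φ '' Set.range (wordMap g w)) ≤
      (K ^ s * (μH[s]).real (Set.univ : Set Y)) * (w.map fun j ↦ r j ^ s).prod := by
  have hle := hφ.hausdorffMeasure_image_le hs (Set.range (wordMap g w))
  rw [h.hausdorffMeasure_range_wordMap hs] at hle
  have hK : (K : ENNReal) ^ s ≠ ⊤ := ENNReal.rpow_ne_top_of_nonneg hs ENNReal.coe_ne_top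
  refine (ENNReal.toReal_mono
    (ENNReal.mul_ne_top hK (ENNReal.mul_ne_top ENNReal.ofReal_ne_top hfin)) hle).trans_eq ?_
  rw [ENNReal.toReal_mul, ENNReal.toReal_mul, ← ENNReal.toReal_rpow, ENNReal.coe_toReal,
    ENNReal.toReal_ofReal (Real.rpow_nonneg (prod_map_pos h.ratio_pos w).le s),
    prod_map_rpow h.ratio_pos, measureReal_def]
  ring

end Measure

variable [CompactSpace Y]

lemma hausdorffMeasure_real_image_range_wordMap_eq_sum [Fintype ι]
    (h : IsDustLikeSystem g r) (hφ : Continuous φ) (hinj : Function.Injective φ)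
    (hfin : ∀ A : Set Y, μH[s] (φ '' A) ≠ ⊤) (w : List ι) :
    (μH[s]).real (φ '' Set.range (wordMap g w)) =
      ∑ j, (μH[s]).real (φ '' Set.range (wordMap g (j :: w))) := by
  rw [← h.iUnion_range_wordMap_cons w, Set.image_iUnion]
  refine measureReal_iUnion_fintype (fun i j hij ↦ ?_) (fun j ↦ ?_) fun j ↦ hfin _
  · exact (Set.disjoint_image_iff hinj).2 (h.disjoint_range_wordMap_cons w hij)
  · exact ((isCompact_range (h.lipschitzWith_wordMap _).continuous).image hφ).measurableSet

lemma exists_pos_forall_mul_prod_le_dist_image [Finite ι] (h : IsDustLikeSystem g r)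
    (hφ : AntilipschitzWith K φ) :
    ∃ c > 0, c ≤ 1 ∧ ∀ w, ∀ x ∈ φ '' Set.range (wordMap g w), ∀ y ∈ Set.range φ,
      y ∉ φ '' Set.range (wordMap g w) → c * (w.map r).prod ≤ dist x y := by
  obtain ⟨δ, hδ, hsep⟩ := h.exists_pos_forall_mul_prod_le_dist
  have hK : (0 : ℝ) < K + 1 := by positivity
  refine ⟨min 1 (δ / (K + 1)), lt_min one_pos (div_pos hδ hK), min_le_left .., fun w ↦ ?_⟩
  rintro _ ⟨x, hx, rfl⟩ _ ⟨y, rfl⟩ hy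
  calc min 1 (δ / (K + 1)) * (w.map r).prod ≤ δ / (K + 1) * (w.map r).prod :=
        mul_le_mul_of_nonneg_right (min_le_right ..) (prod_map_pos h.ratio_pos w).le
    _ = δ * (w.map r).prod / (K + 1) := div_mul_eq_mul_div ..
    _ ≤ dist (φ x) (φ y) := by
        rw [div_le_iff₀' hK]
        linarith [hsep w x hx y fun hy' ↦ hy ⟨y, hy', rfl⟩, hφ.le_mul_dist x y,
          dist_nonneg (x := φ x) (y := φ y)]

lemma dist_le_of_mem_image_range_wordMap (h : IsDustLikeSystem g r) (hφ : LipschitzWith K φ)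
    (w : List ι) {x y : ℝ} (hx : x ∈ φ '' Set.range (wordMap g w))
    (hy : y ∈ φ '' Set.range (wordMap g w)) :
    dist x y ≤ K * ((w.map r).prod * Metric.diam (Set.univ : Set Y)) := by
  obtain ⟨_, ⟨x, rfl⟩, rfl⟩ := hx
  obtain ⟨_, ⟨y, rfl⟩, rfl⟩ := hy
  refine (hφ.dist_le_mul _ _).trans (mul_le_mul_of_nonneg_left ?_ K.2)
  rw [h.dist_wordMap]
  exact mul_le_mul_of_nonneg_left
    (Metric.dist_le_diam_of_mem isCompact_univ.isBounded (Set.mem_univ x) (Set.mem_univ y))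
    (prod_map_pos h.ratio_pos w).le

lemma exists_finite_forall_hausdorffMeasure_real_eq [Nonempty Y] [Finite ι]
    (h : IsDustLikeSystem g r) {B : Finset ℝ} (hE : IsOverlapSystem lam B (Set.range φ))
    (hφ : LipschitzWith K φ) (hφ' : AntilipschitzWith K φ) (hs : 0 < s)
    (hfin : μH[s] (Set.range φ) ≠ ⊤) :
    ∃ (l : List ι → ℕ) (D : ℕ) (S : Set ℝ), S.Finite ∧
      (∀ w, ∃ a ∈ S, (μH[s]).real (φ '' Set.range (wordMap g w)) = (lam ^ s) ^ l w * a) ∧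
      (∀ w j, l w ≤ l (j :: w)) ∧ ∀ w j, l (j :: w) ≤ l w + D := by
  obtain ⟨c, hc, hc1, hsep⟩ := h.exists_pos_forall_mul_prod_le_dist_image hφ'
  obtain ⟨l, D, hl⟩ := exists_level_of_prod hE.pos hE.lt_one h.ratio_pos h.ratio_lt_one hc hc1
  obtain ⟨N, hN⟩ := hE.exists_hausdorffMeasure_real_eq_of_separated hs hfin
    (K * Metric.diam (Set.univ : Set Y) / (c * lam))
  refine ⟨l, D, (fun q : ℕ × ℕ ↦ (μH[s]).real (Set.range φ) * (q.1 - lam ^ s * q.2)) ''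
    (Set.Iic N ×ˢ Set.Iic N), ((Set.finite_Iic N).prod (Set.finite_Iic N)).image _,
    fun w ↦ ?_, fun w j ↦ ((hl w).2.2 j).1, fun w j ↦ ((hl w).2.2 j).2⟩
  obtain ⟨hlt, hle, -⟩ := hl w
  have hdiam : K * ((w.map r).prod * Metric.diam (Set.univ : Set Y)) ≤
      K * Metric.diam (Set.univ : Set Y) / (c * lam) * lam ^ l w := by
    rw [div_mul_eq_mul_div, le_div_iff₀ (mul_pos hc hE.pos)]
    calc K * ((w.map r).prod * Metric.diam Set.univ) * (c * lam)
        = K * Metric.diam (Set.univ : Set Y) * (c * (w.map r).prod * lam) := by ring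
      _ ≤ K * Metric.diam (Set.univ : Set Y) * lam ^ l w :=
          mul_le_mul_of_nonneg_left hle (mul_nonneg K.2 Metric.diam_nonneg)
  obtain ⟨a, ha, b, hb, heq⟩ := hN (l w) _ (Set.image_subset_range φ _)
    ((Set.range_nonempty (wordMap g w)).image φ)
    (fun x hx y hy hxy ↦ hlt.trans_le (hsep w x hx y hy hxy))
    fun x hx y hy ↦ (h.dist_le_of_mem_image_range_wordMap hφ w hx hy).trans hdiam
  exact ⟨_, ⟨(a, b), ⟨ha, hb⟩, rfl⟩, heq⟩

theorem perfectPower_card_overlaps [Finite ι] [Nontrivial ι] (h : IsDustLikeSystem g r)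
    {B : Finset ℝ} (hE : IsOverlapSystem lam B (Set.range φ)) (hφ : LipschitzWith K φ)
    (hφ' : AntilipschitzWith K φ) (hm : 1 ≤ (overlaps lam lam B).card)
    (hmn : (overlaps lam lam B).card + 2 ≤ B.card) :
    ∃ a i : ℕ, 2 ≤ i ∧ (overlaps lam lam B).card = a ^ i := by
  have := Fintype.ofFinite ι
  borelize Y
  have : Nonempty Y := Set.range_nonempty_iff_nonempty.1 hE.nonempty
  obtain ⟨s, hs, hsum⟩ := exists_pos_sum_rpow_eq_one h.ratio_pos h.ratio_lt_one
  have hY := h.hausdorffMeasure_univ_ne_top hs hsum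
  have hfin (A : Set Y) : μH[s] (φ '' A) ≠ ⊤ :=
    hausdorffMeasure_image_ne_top hφ hs.le (measure_ne_top_of_subset A.subset_univ hY)
  have hpos := h.hausdorffMeasure_image_range_wordMap_ne_zero hφ' hs.le
    (h.hausdorffMeasure_univ_ne_zero hs hsum)
  have hrange : φ '' Set.range (wordMap g []) = Set.range φ := by simp [wordMap]
  have hquadratic := hE.card_mul_sub_card_overlaps_mul_sq_eq_one hs
    (hrange ▸ hfin _) (hrange ▸ hpos [])
  obtain ⟨l, D, S, hS, hmeasure, hl, hlD⟩ :=
    h.exists_finite_forall_hausdorffMeasure_real_eq hE hφ hφ' hs (hrange ▸ hfin _)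
  have hweight (j : ι) : 0 < r j ^ s := Real.rpow_pos_of_pos (h.ratio_pos j) s
  have hlam := Real.rpow_pos_of_pos hE.pos s
  refine perfectPower_of_sum_eq_one_of_pow_eq_pow hm hmn hlam hquadratic hweight hsum ?_
  exact exists_pow_eq_pow_of_additive hweight
    (fun j ↦ Real.rpow_lt_one (h.ratio_pos j).le (h.ratio_lt_one j) hs) hsum
    (fun w ↦ ENNReal.toReal_pos (hpos w) (hfin _))
    (h.hausdorffMeasure_real_image_range_wordMap_eq_sum hφ.continuous hφ'.injective hfin)
    (h.hausdorffMeasure_real_image_range_wordMap_le hφ hs.le hY) hlam hS hmeasure hl hlD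

end IsDustLikeSystem

end LipschitzImage

lemma LipEquiv.exists_lipschitzWith_antilipschitzWith {X Y : Type*} [MetricSpace X]
    [MetricSpace Y] {A : Set X} {B : Set Y} (h : LipEquiv A B) :
    ∃ (φ : B → X) (K : NNReal), LipschitzWith K φ ∧ AntilipschitzWith K φ ∧ Set.range φ = A := by
  obtain ⟨f, hf, C, hC, hfC⟩ := h
  obtain ⟨e, rfl⟩ : ∃ e : A ≃ B, ⇑e = f := ⟨Equiv.ofBijective f hf, rfl⟩
  lift C to NNReal using hC.le
  refine ⟨fun y ↦ e.symm y, C, .of_dist_le_mul fun x y ↦ ?_, .of_le_mul_dist fun x y ↦ ?_, ?_⟩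
  · have hle := (hfC (e.symm x) (e.symm y)).1
    rw [e.apply_symm_apply, e.apply_symm_apply] at hle
    exact (inv_mul_le_iff₀ hC).1 hle
  · have hle := (hfC (e.symm x) (e.symm y)).2
    rwa [e.apply_symm_apply, e.apply_symm_apply] at hle
  · exact (e.symm.surjective.range_comp _).trans Subtype.range_coe

lemma isDustLikeSystem_restrict {ι Z : Type*} [MetricSpace Z] {F : Set Z} {g : ι → Z → Z}
    {r : ι → ℝ} (hr : ∀ j, r j ∈ Set.Ioo 0 1) (hg : ∀ j x y, dist (g j x) (g j y) = r j * dist x y)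
    (hF : F = ⋃ j, g j '' F) (hdisj : Pairwise fun i j ↦ Disjoint (g i '' F) (g j '' F))
    (hmaps : ∀ j, Set.MapsTo (g j) F F) :
    IsDustLikeSystem (fun j ↦ (hmaps j).restrict) r where
  ratio_pos j := (hr j).1
  ratio_lt_one j := (hr j).2
  dist_map j x y := hg j x y
  iUnion_range := by
    refine Set.eq_univ_of_forall fun x ↦ ?_
    obtain ⟨j, y, hy, hxy⟩ := Set.mem_iUnion.1 (hF ▸ x.2 : x.1 ∈ ⋃ j, g j '' F)
    exact Set.mem_iUnion.2 ⟨j, ⟨y, hy⟩, Subtype.ext hxy⟩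
  disjoint_range i j hij := by
    refine Set.disjoint_left.2 ?_
    rintro _ ⟨x, rfl⟩ ⟨y, hxy⟩
    exact Set.disjoint_left.1 (hdisj hij) ⟨x, x.2, rfl⟩ ⟨y, y.2, congrArg Subtype.val hxy⟩

theorem perfectPower_of_lipEquiv_dustLike_general {lam : ℝ} {n m : ℕ} {E : Set ℝ}
    (hE : IsInClassA lam n m E) {ι Z : Type*} [Finite ι] [Nontrivial ι] [MetricSpace Z]
    {F : Set Z} (hFc : IsCompact F) {g : ι → Z → Z} {r : ι → ℝ} (hr : ∀ j, r j ∈ Set.Ioo 0 1)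
    (hg : ∀ j x y, dist (g j x) (g j y) = r j * dist x y) (hF : F = ⋃ j, g j '' F)
    (hdisj : Pairwise fun i j ↦ Disjoint (g i '' F) (g j '' F)) (hEF : LipEquiv E F) :
    ∃ a i : ℕ, 2 ≤ i ∧ m = a ^ i := by
  obtain ⟨φ, K, hφ, hφ', rfl⟩ := hEF.exists_lipschitzWith_antilipschitzWith
  obtain ⟨B, hB, rfl, rfl⟩ := hE.exists_isOverlapSystem
  have hmaps (j : ι) : Set.MapsTo (g j) F F := fun x hx ↦
    hF.symm.subset (Set.mem_iUnion.2 ⟨j, x, hx, rfl⟩)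
  have : CompactSpace F := isCompact_iff_compactSpace.1 hFc
  exact (isDustLikeSystem_restrict hr hg hF hdisj hmaps).perfectPower_card_overlaps hB hφ hφ'
    hE.2.1 hE.2.2.1

/-- If `E ∈ 𝒜(λ, n, m)` is Lipschitz equivalent to some dust-like
self-similar set, then `m` is a perfect power: `m = a^i` with `a, i ∈ ℕ`, `i ≥ 2`. -/
theorem perfectPower_of_lipEquiv_dustLike
    (lam : ℝ) (n m : ℕ) (E : Set ℝ) (hE : IsInClassA lam n m E)
    (hF : ∃ (d : ℕ) (F : Set (EuclideanSpace ℝ (Fin d))), IsDustLike F ∧ LipEquiv E F) :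
    ∃ a i : ℕ, 2 ≤ i ∧ m = a ^ i := by
  obtain ⟨_, _, ⟨-, hFc, t, ht, _, _, hr, hg, hF, hdisj⟩, hEF⟩ := hF
  have : Nontrivial (Fin t) := Fin.nontrivial_iff_two_le.2 ht
  exact perfectPower_of_lipEquiv_dustLike_general hE hFc hr hg hF hdisj hEF
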